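/- arXiv:1912.08328 — 3 statements merged into one kernel-verified Lean document; each statement's English description precedes it below -/
import Mathlib

section
/- Let 0 < η < e^{−1}, let H be a graph on k vertices with at least one edge, and set λ = η^{1−1/|E(H)|} / (5 log(1/η)), where |E(H)| is the number of edges of H. Then for all n sufficiently large (in terms of η and H), every graph G on n vertices containing at least η n^k labeled copies of H (i.e., at least η n^k injective maps from V(H) to V(G) sending every edge of H to an edge of G) contains a copy of the blowup H[t] with t = ⌊λ log n⌋. -/
/-- The `n`-blowup of a graph: each vertex is replaced by an independent set of `n` vertices,
and each edge by a complete bipartite graph between the corresponding sets. -/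
def blowupGraph {V : Type} (G : SimpleGraph V) (n : ℕ) : SimpleGraph (V × Fin n) :=
  SimpleGraph.comap Prod.fst G

/-- The coloring `C` admits a monochromatic copy of `H` in `G`. -/
def HasMonoCopy {V α : Type} (G : SimpleGraph V) (H : SimpleGraph α) {r : ℕ}
    (C : Sym2 V → Fin r) : Prop :=
  ∃ (f : α → V) (c : Fin r), Function.Injective f ∧
    ∀ a b, H.Adj a b → G.Adj (f a) (f b) ∧ C s(f a, f b) = c

/-- `G →_r H`: every `r`-coloring of the edges of `G` contains a monochromatic copy of `H`. -/
def ArrowsFor {V α : Type} (G : SimpleGraph V) (H : SimpleGraph α) (r : ℕ) : Prop :=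
  ∀ C : Sym2 V → Fin r, HasMonoCopy G H C

/-- The coloring `C` of `G[n]` admits a monochromatic canonical copy of `H[t]`:
an embedding `φ` of `H` into `G`, together with `t` blowup vertices `ψ a` in the part indexed
by `φ a` for each vertex `a` of `H`, all of whose blowup edges receive the same color `c`. -/
def HasMonoCanonicalBlowup {V α : Type} (G : SimpleGraph V) (H : SimpleGraph α)
    (n t r : ℕ) (C : Sym2 (V × Fin n) → Fin r) : Prop :=
  ∃ (φ : α → V) (ψ : α → Fin t → Fin n) (c : Fin r),
    Function.Injective φ ∧ (∀ a, Function.Injective (ψ a)) ∧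
    ∀ a b, H.Adj a b → G.Adj (φ a) (φ b) ∧ ∀ i j, C s((φ a, ψ a i), (φ b, ψ b j)) = c

/-- Every `r`-coloring of the edges of `G[n]` contains a monochromatic canonical copy of `H[t]`.
The blowup Ramsey number `B_r(G → H; t)` is the minimum such `n`. -/
def BlowupArrow {V α : Type} (G : SimpleGraph V) (H : SimpleGraph α) (r n t : ℕ) : Prop :=
  ∀ C : Sym2 (V × Fin n) → Fin r, HasMonoCanonicalBlowup G H n t r C

/-- `G` contains a copy of `H` (an injective map preserving adjacency). -/
def ContainsCopy {α V : Type} (H : SimpleGraph α) (G : SimpleGraph V) : Prop :=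
  ∃ f : α → V, Function.Injective f ∧ ∀ a b, H.Adj a b → G.Adj (f a) (f b)

/-!
Szemerédi's regularity lemma yields disjoint, pairwise `ε`-regular sets `V a`, `a ∈ V(H)`, of linear
size that span about `P ∏ |V a|` copies of `H`, where `P` is the product of the edge densities
between them and `P ≥ 0.99 η`. Some edge `ab` of `H` has density `d ≤ P ^ (1/m)`, `m = |E(H)|`.

A pair `(x, y) ∈ V a × V b` is weighted by the fraction of the completions of `a ↦ x`, `b ↦ y` that
are copies of `H`. The weight is supported on the edges of `G` and has mean about `P`, so its mean
exceeds that of `θ 1_G` as soon as `θ` is slightly smaller than `P / d`, which is at least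
`P ^ (1 - 1/m)`. Dependent random choice then produces `s = ⌊log n / (4 log (1/η))⌋` edges
`x_i y_i` whose endpoints span a `K_{s,s}` and whose total weight is at least `θ s`.

The remaining vertices of `H` are added one at a time. The elements of `V b` are classed by the set
of rows that they extend with positive weight. There are at most `2 ^ s` classes, few compared with
`|V b|`, so on some large class the mean total weight drops by at most `1`, and the rows extended by
that class receive distinct elements of it. Once all of `H` is present the weights are `0` or `1`,
and the rows of weight `1`, at least `θ s - k` of them with `k = |V(H)|`, form the blowup.
-/

section Averaging

open Finset

theorem exists_injOn_sum_le {ι β M : Type*} [AddCommMonoid M] [LinearOrder M]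
    [IsOrderedAddMonoid M] {J : Finset ι} {U : Finset β} (hU : U.Nonempty) (hJU : #J ≤ #U)
    (f : ι → β → M) :
    ∃ u : ι → β, (∀ j, u j ∈ U) ∧ Set.InjOn u J ∧
      ∑ j ∈ J, ∑ y ∈ U, f j y ≤ #U • ∑ j ∈ J, f j (u j) := by
  have : NeZero #U := ⟨hU.card_ne_zero⟩
  let e : Fin #U ≃ U := U.equivFin.symm
  obtain ⟨p, -, hp⟩ : ∃ p : ι → Fin #U, (J : Set ι) ⊆ p ⁻¹' Set.univ ∧ Set.InjOn p J :=
    J.finite_toSet.exists_injOn_of_encard_le (by simpa using hJU)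
  -- The cyclic shifts of `p` partition `J ×ˢ U` into `#U` matchings.
  have sum_shifts : ∑ r, ∑ j ∈ J, f j (e (p j + r)) = ∑ j ∈ J, ∑ y ∈ U, f j y := by
    rw [sum_comm]
    refine sum_congr rfl fun j _ ↦ ?_
    rw [← sum_coe_sort U (f j)]
    exact Fintype.sum_equiv ((Equiv.addLeft (p j)).trans e) _ _ fun _ ↦ rfl
  obtain ⟨r, -, hr⟩ := exists_max_image univ (fun r ↦ ∑ j ∈ J, f j (e (p j + r))) univ_nonempty
  refine ⟨fun j ↦ e (p j + r), fun j ↦ (e _).2, fun i hi j hj hij ↦ ?_, ?_⟩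
  · exact hp hi hj (add_right_cancel (e.injective (Subtype.ext hij)))
  · rw [← sum_shifts]
    simpa using sum_le_card_nsmul univ _ _ hr

theorem exists_large_fiber_mul_card_le_sum {β γ : Type*} [DecidableEq γ] {V : Finset β}
    (hV : V.Nonempty) (T : β → γ) {g : β → ℝ} {B c : ℝ} {m : ℕ} (hB : 0 ≤ B)
    (hgB : ∀ v ∈ V, g v ≤ B) (hc : 0 < c) (h : c * #V + #(V.image T) * (B * m) ≤ ∑ v ∈ V, g v) :
    ∃ p ∈ V.image T, m ≤ #{v ∈ V | T v = p} ∧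
      c * #{v ∈ V | T v = p} ≤ ∑ v ∈ V with T v = p, g v := by
  by_contra! hcon
  have fiber_lt : ∀ p ∈ V.image T,
      ∑ v ∈ V with T v = p, g v < c * #{v ∈ V | T v = p} + B * m := by
    intro p hp
    have hpos : (0 : ℝ) < #{v ∈ V | T v = p} := by
      rw [Nat.cast_pos, card_pos]
      exact fiber_nonempty_iff_mem_image.2 hp
    rcases lt_or_ge #{v ∈ V | T v = p} m with hlt | hge
    · have hlt' : (#{v ∈ V | T v = p} : ℝ) < m := by exact_mod_cast hlt
      have hle : ∑ v ∈ V with T v = p, g v ≤ #{v ∈ V | T v = p} • B :=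
        sum_le_card_nsmul _ _ _ fun v hv ↦ hgB v (mem_filter.1 hv).1
      rw [nsmul_eq_mul] at hle
      nlinarith
    · linarith [hcon p hp hge, mul_nonneg hB m.cast_nonneg]
  refine h.not_gt ?_
  calc ∑ v ∈ V, g v = ∑ p ∈ V.image T, ∑ v ∈ V with T v = p, g v :=
        (sum_fiberwise_of_maps_to (fun _ ↦ mem_image_of_mem T) g).symm
    _ < ∑ p ∈ V.image T, (c * #{v ∈ V | T v = p} + B * m) :=
        sum_lt_sum_of_nonempty (hV.image T) fiber_lt
    _ = c * #V + #(V.image T) * (B * m) := by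
        rw [sum_add_distrib, ← mul_sum, sum_const, nsmul_eq_mul,
          card_eq_sum_card_fiberwise (fun _ ↦ mem_image_of_mem T) (s := V) (t := V.image T)]
        push_cast
        rfl

theorem exists_subset_injOn_sub_one_le_sum {ι β : Type*} {J : Finset ι} {V : Finset β}
    (hV : V.Nonempty) (hJV : 2 ^ #J * #J ^ 2 ≤ #V) {f : ι → β → ℝ} (hf0 : ∀ j v, 0 ≤ f j v)
    (hf1 : ∀ j v, f j v ≤ 1) {τ : ℝ} (hτ : τ * #V ≤ ∑ j ∈ J, ∑ v ∈ V, f j v) :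
    ∃ J' ⊆ J, ∃ u : ι → β, (∀ j ∈ J', u j ∈ V) ∧ Set.InjOn u J' ∧
      (∀ i ∈ J', ∀ j ∈ J', 0 < f i (u j)) ∧ τ - 1 ≤ ∑ j ∈ J', f j (u j) := by
  classical
  rcases le_or_gt τ 1 with hτ1 | hτ1
  · exact ⟨∅, empty_subset J, fun _ ↦ hV.choose, by simp, by simp, by simp, by simpa using hτ1⟩
  let support (v : β) : Finset ι := {j ∈ J | 0 < f j v}
  have sum_support (v : β) : ∑ j ∈ support v, f j v = ∑ j ∈ J, f j v :=
    sum_filter_of_ne fun j _ hne ↦ (hf0 j v).lt_of_ne' hne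
  have card_supports : #(V.image support) ≤ 2 ^ #J := by
    rw [← card_powerset]
    exact card_le_card (image_subset_iff.2 fun v _ ↦ mem_powerset.2 (filter_subset _ _))
  have budget : (τ - 1) * #V + #(V.image support) * (#J * #J : ℝ) ≤ ∑ v ∈ V, ∑ j ∈ J, f j v := by
    have : (#(V.image support) * (#J * #J) : ℝ) ≤ #V := by
      rw [← sq]
      exact_mod_cast (Nat.mul_le_mul_right _ card_supports).trans hJV
    rw [sum_comm]
    linarith
  obtain ⟨J', hJ', hcard, hsum⟩ := exists_large_fiber_mul_card_le_sum hV support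
    (Nat.cast_nonneg _) (fun v _ ↦ by
      simpa using sum_le_card_nsmul J (f · v) 1 fun j _ ↦ hf1 j v) (sub_pos.2 hτ1) budget
  obtain ⟨v₀, hv₀, rfl⟩ := mem_image.1 hJ'
  set U : Finset β := {v ∈ V | support v = support v₀}
  have hU : U.Nonempty := ⟨v₀, mem_filter.2 ⟨hv₀, rfl⟩⟩
  have hJ'J : support v₀ ⊆ J := filter_subset _ _
  obtain ⟨u, huU, hinj, hu⟩ := exists_injOn_sum_le hU
    ((card_le_card hJ'J).trans hcard) f
  refine ⟨support v₀, hJ'J, u, fun j _ ↦ (mem_filter.1 (huU j)).1, hinj, fun i hi j _ ↦ ?_, ?_⟩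
  · rw [← (mem_filter.1 (huU j)).2] at hi
    exact (mem_filter.1 hi).2
  · have hUpos : (0 : ℝ) < #U := by exact_mod_cast hU.card_pos
    refine le_of_mul_le_mul_left ?_ hUpos
    calc #U * (τ - 1) ≤ ∑ v ∈ U, ∑ j ∈ J, f j v := by linarith
      _ = ∑ j ∈ support v₀, ∑ v ∈ U, f j v := by
          rw [sum_comm (s := support v₀)]
          exact sum_congr rfl fun v hv ↦ by rw [← sum_support, (mem_filter.1 hv).2]
      _ ≤ #U * ∑ j ∈ support v₀, f j (u j) := by simpa using hu

end Averaging

section Resampling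

open Finset Function

variable {α : Type*} [Fintype α] [DecidableEq α]

theorem update_mem_piFinset {β : α → Type*} {V : ∀ a, Finset (β a)} {f : ∀ a, β a}
    (hf : f ∈ Fintype.piFinset V) {a : α} {x : β a} (hx : x ∈ V a) :
    update f a x ∈ Fintype.piFinset V := by
  rw [Fintype.mem_piFinset] at hf ⊢
  exact forall_update_iff f (p := fun b y ↦ y ∈ V b) |>.2 ⟨hx, fun b _ ↦ hf b⟩

theorem sum_piFinset_sum_update {β : α → Type*} {M : Type*} [AddCommMonoid M]
    (V : ∀ a, Finset (β a)) (a : α) (Φ : (∀ a, β a) → M) :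
    ∑ f ∈ Fintype.piFinset V, ∑ x ∈ V a, Φ (update f a x) =
      #(V a) • ∑ f ∈ Fintype.piFinset V, Φ f := by
  -- Exchanging `f a` with `x` is an involution of `piFinset V ×ˢ V a`.
  have swap_mem : ∀ p ∈ Fintype.piFinset V ×ˢ V a,
      (update p.1 a p.2, p.1 a) ∈ Fintype.piFinset V ×ˢ V a := fun p hp ↦ by
    obtain ⟨hf, hx⟩ := mem_product.1 hp
    exact mem_product.2 ⟨update_mem_piFinset hf hx, Fintype.mem_piFinset.1 hf a⟩
  calc ∑ f ∈ Fintype.piFinset V, ∑ x ∈ V a, Φ (update f a x)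
      = ∑ p ∈ Fintype.piFinset V ×ˢ V a, Φ (update p.1 a p.2) := (sum_product' ..).symm
    _ = ∑ p ∈ Fintype.piFinset V ×ˢ V a, Φ p.1 :=
        sum_nbij' (fun p ↦ (update p.1 a p.2, p.1 a)) (fun p ↦ (update p.1 a p.2, p.1 a))
          swap_mem swap_mem (by simp) (by simp) (by simp)
    _ = #(V a) • ∑ f ∈ Fintype.piFinset V, Φ f := by simp [sum_product, sum_nsmul]

theorem sum_piFinset_sum_update_update {β : α → Type*} {M : Type*} [AddCommMonoid M]
    (V : ∀ a, Finset (β a)) (a b : α) (Φ : (∀ a, β a) → M) :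
    ∑ f ∈ Fintype.piFinset V, ∑ x ∈ V a, ∑ y ∈ V b, Φ (update (update f a x) b y) =
      (#(V a) * #(V b)) • ∑ f ∈ Fintype.piFinset V, Φ f := by
  rw [sum_piFinset_sum_update V a fun f ↦ ∑ y ∈ V b, Φ (update f b y),
    sum_piFinset_sum_update, mul_smul]

theorem card_piFinset_filter_pair_mul {β : α → Type*} (V : ∀ a, Finset (β a)) {a b : α}
    (hab : a ≠ b) (p : β a → β b → Prop) [∀ x y, Decidable (p x y)] :
    #{f ∈ Fintype.piFinset V | p (f a) (f b)} * (#(V a) * #(V b)) =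
      #{z ∈ V a ×ˢ V b | p z.1 z.2} * ∏ i, #(V i) := by
  have resampled_value (f : ∀ a, β a) (x : β a) (y : β b) :
      (if p (update (update f a x) b y a) (update (update f a x) b y b) then 1 else 0) =
        if p x y then 1 else 0 := by
    simp [update_of_ne hab]
  have := sum_piFinset_sum_update_update V a b fun f ↦ if p (f a) (f b) then 1 else 0
  simp only [resampled_value, sum_const, Fintype.card_piFinset, smul_eq_mul] at this
  rw [card_filter, card_filter, sum_product]
  linarith

theorem card_not_injective_mul_card_le {ι β : Type*} [Fintype ι] [DecidableEq ι] [DecidableEq β]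
    (X : Finset β) :
    #{x ∈ Fintype.piFinset fun _ : ι ↦ X | ¬ Injective x} * #X ≤
      Fintype.card ι ^ 2 * #X ^ Fintype.card ι := by
  rcases X.eq_empty_or_nonempty with rfl | hX
  · simp
  have collision (ij : ι × ι) : #{x ∈ Fintype.piFinset fun _ : ι ↦ X |
      ij.1 ≠ ij.2 ∧ x ij.1 = x ij.2} * #X ≤ #X ^ Fintype.card ι := by
    by_cases hij : ij.1 = ij.2
    · simp [hij]
    have hdiag : #{z ∈ X ×ˢ X | z.1 = z.2} = #X := by
      rw [← diag_eq_filter, diag_card]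
    have := card_piFinset_filter_pair_mul (fun _ : ι ↦ X) hij (· = ·)
    simp only [hdiag, prod_const, card_univ, ← mul_assoc] at this
    simp only [ne_eq, hij, not_false_eq_true, true_and]
    exact (Nat.eq_of_mul_eq_mul_right hX.card_pos (this.trans (mul_comm _ _))).le
  have cover : {x ∈ Fintype.piFinset fun _ : ι ↦ X | ¬ Injective x} ⊆
      univ.biUnion fun ij : ι × ι ↦ {x ∈ Fintype.piFinset fun _ : ι ↦ X |
        ij.1 ≠ ij.2 ∧ x ij.1 = x ij.2} := fun x hx ↦ by
    obtain ⟨hxX, hx⟩ := mem_filter.1 hx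
    obtain ⟨i, j, hij, hne⟩ := not_injective_iff.1 hx
    exact mem_biUnion.2 ⟨(i, j), mem_univ _, mem_filter.2 ⟨hxX, hne, hij⟩⟩
  calc _ ≤ ∑ ij : ι × ι, #{x ∈ Fintype.piFinset fun _ : ι ↦ X |
          ij.1 ≠ ij.2 ∧ x ij.1 = x ij.2} * #X := by
        rw [← sum_mul]
        exact Nat.mul_le_mul_right _ ((card_le_card cover).trans card_biUnion_le)
    _ ≤ ∑ _ij : ι × ι, #X ^ Fintype.card ι := sum_le_sum fun ij _ ↦ collision ij
    _ = Fintype.card ι ^ 2 * #X ^ Fintype.card ι := by simp [sq]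

end Resampling

section DependentRandomChoice

open Finset Function

variable {ι β γ : Type*} [Fintype ι]

/-- The members of `Y` that are `R`-related to every term of the tuple `x`: the common
neighborhood of `x` in the bipartite graph `R`. -/
def commonNeighbors (R : β → γ → Prop) [DecidableRel R] (Y : Finset γ) (x : ι → β) :
    Finset γ :=
  {y ∈ Y | ∀ i, R (x i) y}

variable {R : β → γ → Prop} {X : Finset β} {Y : Finset γ}
  {h : β → γ → ℝ} {κ : ℝ}

theorem sum_piFinset_sum_commonNeighbors [DecidableEq ι] [DecidableRel R]
    (hR : ∀ x y, ¬ R x y → h x y = 0) :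
    ∑ x ∈ Fintype.piFinset fun _ : ι ↦ X, ∑ y ∈ commonNeighbors R Y x, ∑ i, h (x i) y =
      Fintype.card ι *
        ∑ y ∈ Y, (∑ x ∈ X, h x y) * (#{x ∈ X | R x y} : ℝ) ^ (Fintype.card ι - 1) := by
  have tuples_joined (y : γ) : {x ∈ Fintype.piFinset fun _ : ι ↦ X | ∀ i, R (x i) y} =
      Fintype.piFinset fun _ ↦ {x ∈ X | R x y} := by
    ext x
    simp [Fintype.mem_piFinset, forall_and]
  have sum_filter_eq (y : γ) : ∑ x ∈ X with R x y, h x y = ∑ x ∈ X, h x y :=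
    sum_filter_of_ne fun x _ hne ↦ not_not.1 (mt (hR x y) hne)
  simp only [commonNeighbors, sum_filter]
  rw [sum_comm, mul_sum]
  refine sum_congr rfl fun y _ ↦ ?_
  rw [← sum_filter, tuples_joined, sum_comm]
  simp only [Fintype.sum_piFinset_apply (h · y), sum_filter_eq, sum_const, card_univ, nsmul_eq_mul]
  push_cast
  ring

theorem pow_sum_le_card_pow_mul_sum_mul_pow {g d : γ → ℝ} (hg : ∀ y ∈ Y, 0 ≤ g y)
    (hgd : ∀ y ∈ Y, g y ≤ d y) {s : ℕ} (hs : s ≠ 0) :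
    (∑ y ∈ Y, g y) ^ s ≤ (#Y : ℝ) ^ (s - 1) * ∑ y ∈ Y, g y * d y ^ (s - 1) := by
  obtain ⟨n, rfl⟩ := Nat.exists_eq_succ_of_ne_zero hs
  refine (pow_sum_le_card_mul_sum_pow hg n).trans ?_
  refine mul_le_mul_of_nonneg_left (sum_le_sum fun y hy ↦ ?_) (by positivity)
  rw [pow_succ']
  exact mul_le_mul_of_nonneg_left (pow_le_pow_left₀ (hg y hy) (hgd y hy) n) (hg y hy)

theorem card_mul_pow_le_sum_piFinset_sum_commonNeighbors [Nonempty ι] [DecidableEq ι]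
    [DecidableRel R] (h1 : ∀ x y, h x y ≤ 1) (hR : ∀ x y, ¬ R x y → h x y = 0)
    (hY : ∀ y ∈ Y, 0 ≤ ∑ x ∈ X, h x y) {n : ℕ} (hYn : #Y ≤ n) (hκ : 0 ≤ κ)
    (hsum : κ * (#X * n) ≤ ∑ y ∈ Y, ∑ x ∈ X, h x y) :
    Fintype.card ι * (κ ^ Fintype.card ι * #X ^ Fintype.card ι * n) ≤
      ∑ x ∈ Fintype.piFinset fun _ : ι ↦ X, ∑ y ∈ commonNeighbors R Y x, ∑ i, h (x i) y := by
  rcases n.eq_zero_or_pos with rfl | hn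
  · obtain rfl : Y = ∅ := card_eq_zero.1 (Nat.le_zero.1 hYn)
    simp [commonNeighbors]
  set s := Fintype.card ι
  have hs : s ≠ 0 := Fintype.card_ne_zero
  have le_degree (y : γ) : ∑ x ∈ X, h x y ≤ #{x ∈ X | R x y} := by
    rw [← sum_filter_of_ne fun x _ hne ↦ not_not.1 (mt (hR x y) hne)]
    simpa using sum_le_card_nsmul _ _ 1 fun x _ ↦ h1 x y
  rw [sum_piFinset_sum_commonNeighbors hR]
  refine mul_le_mul_of_nonneg_left ?_ s.cast_nonneg
  have hn' : (0 : ℝ) < n ^ (s - 1) := by positivity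
  refine le_of_mul_le_mul_left ?_ hn'
  calc n ^ (s - 1) * (κ ^ s * #X ^ s * n) = (κ * (#X * n)) ^ s := by
        rw [mul_pow, mul_pow, ← pow_sub_one_mul hs (n : ℝ)]
        ring
    _ ≤ (∑ y ∈ Y, ∑ x ∈ X, h x y) ^ s := by gcongr
    _ ≤ (#Y : ℝ) ^ (s - 1) * ∑ y ∈ Y, (∑ x ∈ X, h x y) * (#{x ∈ X | R x y} : ℝ) ^ (s - 1) :=
        pow_sum_le_card_pow_mul_sum_mul_pow hY (fun y _ ↦ le_degree y) hs
    _ ≤ n ^ (s - 1) * ∑ y ∈ Y, (∑ x ∈ X, h x y) * (#{x ∈ X | R x y} : ℝ) ^ (s - 1) := by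
        gcongr
        exact sum_nonneg fun y hy ↦ mul_nonneg (hY y hy) (by positivity)

theorem sum_commonNeighbors_le [DecidableRel R] (h1 : ∀ x y, h x y ≤ 1) (x : ι → β) :
    ∑ y ∈ commonNeighbors R Y x, ∑ i, h (x i) y ≤
      Fintype.card ι * #(commonNeighbors R Y x) := by
  have row_le (y : γ) : ∑ i, h (x i) y ≤ Fintype.card ι := by
    simpa using sum_le_card_nsmul univ (fun i ↦ h (x i) y) 1 fun i _ ↦ h1 (x i) y
  simpa [mul_comm] using sum_le_card_nsmul _ _ _ fun y _ ↦ row_le y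

theorem pow_mul_sq_add_mul_lt {s : ℕ} (hs : 1 ≤ (s : ℝ)) (hκ : 0 ≤ κ) {n p b : ℝ}
    (hX : 2 * (s : ℝ) ^ 2 < κ ^ s * p) (hn : 2 * (s : ℝ) ^ 2 < κ ^ s * n)
    (hb : b * p ≤ s ^ 2 * p ^ s) : p ^ s * (s * s) + b * (s * n) < s * (κ ^ s * p ^ s * n) := by
  have hp' : 0 < p := pos_of_mul_pos_right (by nlinarith) (pow_nonneg hκ s)
  have hn' : 0 < n := pos_of_mul_pos_right (by nlinarith) (pow_nonneg hκ s)
  refine lt_of_mul_lt_mul_right ?_ hp'.le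
  calc (p ^ s * (s * s) + b * (s * n)) * p = p ^ s * (s * s) * p + b * p * (s * n) := by ring
    _ ≤ p ^ s * (s * s) * p + s ^ 2 * p ^ s * (s * n) := by gcongr
    _ = s * p ^ s * (s * p + s ^ 2 * n) := by ring
    _ < s * p ^ s * (κ ^ s * p * n) := by
        gcongr
        have : s * p ≤ s ^ 2 * p := by
          gcongr
          exact le_self_pow₀ hs two_ne_zero
        linarith [mul_lt_mul_of_pos_right hX hn', mul_lt_mul_of_pos_right hn hp']
    _ = s * (κ ^ s * p ^ s * n) * p := by ring

theorem exists_injective_sum_commonNeighbors_nonneg [Nonempty ι] [DecidableRel R]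
    (h1 : ∀ x y, h x y ≤ 1) (hR : ∀ x y, ¬ R x y → h x y = 0)
    (hY : ∀ y ∈ Y, 0 ≤ ∑ x ∈ X, h x y) {n : ℕ} (hYn : #Y ≤ n) (hκ : 0 ≤ κ)
    (hsum : κ * (#X * n) ≤ ∑ y ∈ Y, ∑ x ∈ X, h x y)
    (hX : 2 * (Fintype.card ι : ℝ) ^ 2 < κ ^ Fintype.card ι * #X)
    (hn : 2 * (Fintype.card ι : ℝ) ^ 2 < κ ^ Fintype.card ι * n) :
    ∃ x : ι → β, Injective x ∧ (∀ i, x i ∈ X) ∧ Fintype.card ι ≤ #(commonNeighbors R Y x) ∧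
      0 ≤ ∑ y ∈ commonNeighbors R Y x, ∑ i, h (x i) y := by
  classical
  set s := Fintype.card ι
  set Ω := Fintype.piFinset fun _ : ι ↦ X
  by_contra! hcon
  -- A tuple that fails contributes at most `s ^ 2` if injective and at most `s * n` otherwise.
  have le_of_fails : ∀ x ∈ Ω, ∑ y ∈ commonNeighbors R Y x, ∑ i, h (x i) y ≤
      s * s + if ¬ Injective x then (s * n : ℝ) else 0 := by
    intro x hx
    have hle := sum_commonNeighbors_le (R := R) (Y := Y) h1 x
    split_ifs with hinj
    · rcases lt_or_ge #(commonNeighbors R Y x) s with hlt | hge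
      · have : (#(commonNeighbors R Y x) : ℝ) ≤ s := by exact_mod_cast hlt.le
        nlinarith
      · linarith [hcon x hinj (Fintype.mem_piFinset.1 hx) hge, mul_self_nonneg (s : ℝ)]
    · have : (#(commonNeighbors R Y x) : ℝ) ≤ n := by
        exact_mod_cast (card_le_card (filter_subset _ _)).trans hYn
      nlinarith
  have total := (card_mul_pow_le_sum_piFinset_sum_commonNeighbors (ι := ι) h1 hR hY hYn hκ
    hsum).trans (sum_le_sum le_of_fails)
  have hΩ : (#Ω : ℝ) = #X ^ s := by simp [Ω, s]
  rw [sum_add_distrib, ← sum_filter, sum_const, sum_const, nsmul_eq_mul, nsmul_eq_mul, hΩ] at total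
  set B := #{x ∈ Ω | ¬ Injective x}
  have hB : (B * #X : ℝ) ≤ s ^ 2 * #X ^ s := by
    exact_mod_cast card_not_injective_mul_card_le (ι := ι) X
  have hs : (1 : ℝ) ≤ s := by exact_mod_cast Fintype.card_pos (α := ι)
  exact total.not_gt (pow_mul_sq_add_mul_lt hs hκ hX hn hB)

theorem exists_biclique_sum_nonneg [Nonempty ι] (h1 : ∀ x y, h x y ≤ 1)
    (hR : ∀ x y, ¬ R x y → h x y = 0) (hκ : 0 ≤ κ)
    (hsum : κ * (#X * #Y) ≤ ∑ x ∈ X, ∑ y ∈ Y, h x y)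
    (hX : 2 * (Fintype.card ι : ℝ) ^ 2 < κ ^ Fintype.card ι * #X)
    (hY : 2 * (Fintype.card ι : ℝ) ^ 2 < κ ^ Fintype.card ι * #Y) :
    ∃ (x : ι → β) (y : ι → γ), Injective x ∧ Injective y ∧ (∀ i, x i ∈ X) ∧ (∀ i, y i ∈ Y) ∧
      (∀ i j, R (x i) (y j)) ∧ 0 ≤ ∑ i, h (x i) (y i) := by
  classical
  set Y₀ : Finset γ := {y ∈ Y | 0 ≤ ∑ x ∈ X, h x y}
  have hsum₀ : κ * (#X * #Y) ≤ ∑ y ∈ Y₀, ∑ x ∈ X, h x y := by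
    rw [sum_comm] at hsum
    refine hsum.trans ?_
    rw [sum_filter]
    gcongr with y
    split_ifs with hy
    · exact le_rfl
    · exact (not_le.1 hy).le
  obtain ⟨x, hxinj, hxX, hcard, hx⟩ := exists_injective_sum_commonNeighbors_nonneg (ι := ι) h1 hR
    (fun y hy ↦ (mem_filter.1 hy).2) (card_le_card (filter_subset _ _)) hκ hsum₀ hX hY
  have hN : 0 < #(commonNeighbors R Y₀ x) := Fintype.card_pos.trans_le hcard
  obtain ⟨y, hyN, hyinj, hy⟩ := exists_injOn_sum_le (J := univ) (card_pos.1 hN) hcard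
    fun i ↦ h (x i)
  refine ⟨x, y, hxinj, ?_, hxX, fun i ↦ ?_, fun i j ↦ (mem_filter.1 (hyN j)).2 i, ?_⟩
  · simpa using hyinj
  · exact (mem_filter.1 (mem_filter.1 (hyN i)).1).1
  · rw [sum_comm] at hx
    exact (nsmul_nonneg_iff hN.ne').1 (hx.trans hy)

end DependentRandomChoice

section CountingLemma

open Finset Function

variable {α β : Type*}

theorem edgeDensity_mul_card_mul_card (G : SimpleGraph β) [DecidableRel G.Adj] (A B : Finset β) :
    (G.edgeDensity A B : ℝ) * (#A * #B) = #(G.interedges A B) := by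
  rw [SimpleGraph.edgeDensity_def]
  push_cast
  refine div_mul_cancel_of_imp fun hzero ↦ le_antisymm ?_ (Nat.cast_nonneg _)
  rw [← hzero]
  exact_mod_cast G.card_interedges_le_mul A B

theorem sum_sum_ite_adj (G : SimpleGraph β) [DecidableRel G.Adj] (A B : Finset β) (θ : ℝ) :
    ∑ x ∈ A, ∑ y ∈ B, (if G.Adj x y then θ else 0) = #A * #B * (θ * G.edgeDensity A B) := by
  rw [← sum_product', ← sum_filter, sum_const, nsmul_eq_mul, ← SimpleGraph.interedges_def,
    ← edgeDensity_mul_card_mul_card]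
  ring

theorem abs_card_interedges_sub_le {G : SimpleGraph β} [DecidableRel G.Adj] {ε : ℝ}
    {A B A' B' : Finset β} (hU : G.IsUniform ε A B) (hA : A' ⊆ A) (hB : B' ⊆ B) :
    |(#(G.interedges A' B') : ℝ) - G.edgeDensity A B * (#A' * #B')| ≤ ε * (#A * #B) := by
  have hε : 0 < ε := hU.pos
  have hd0 : (0 : ℝ) ≤ G.edgeDensity A B := by exact_mod_cast G.edgeDensity_nonneg A B
  have hd1 : (G.edgeDensity A B : ℝ) ≤ 1 := by exact_mod_cast G.edgeDensity_le_one A B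
  have hinter : (#(G.interedges A' B') : ℝ) ≤ #A' * #B' := by
    exact_mod_cast G.card_interedges_le_mul A' B'
  have trivial_bound :
      |(#(G.interedges A' B') : ℝ) - G.edgeDensity A B * (#A' * #B')| ≤ #A' * #B' := by
    have : (0 : ℝ) ≤ #A' * #B' := by positivity
    rw [abs_le]
    constructor <;> nlinarith [(#(G.interedges A' B')).cast_nonneg (α := ℝ)]
  have hA' : (#A' : ℝ) ≤ #A := by exact_mod_cast card_le_card hA
  have hB' : (#B' : ℝ) ≤ #B := by exact_mod_cast card_le_card hB
  rcases lt_or_ge (#A' : ℝ) (#A * ε) with hsmall | hlargeA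
  · calc _ ≤ (#A' * #B' : ℝ) := trivial_bound
      _ ≤ #A * ε * #B := by gcongr
      _ = ε * (#A * #B) := by ring
  rcases lt_or_ge (#B' : ℝ) (#B * ε) with hsmall | hlargeB
  · calc _ ≤ (#A' * #B' : ℝ) := trivial_bound
      _ ≤ #A * (#B * ε) := by gcongr
      _ = ε * (#A * #B) := by ring
  rw [← edgeDensity_mul_card_mul_card, ← sub_mul, abs_mul,
    abs_of_nonneg (a := (#A' * #B' : ℝ)) (by positivity)]
  have := (hU hA hB hlargeA hlargeB).le
  gcongr

variable (G : SimpleGraph β) [DecidableRel G.Adj] (V : α → Finset β)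

/-- The edge density of `G` between the two parts indexed by an unordered pair. -/
def pairDensity : Sym2 α → ℚ :=
  Sym2.lift ⟨fun a b ↦ G.edgeDensity (V a) (V b), fun a b ↦ G.edgeDensity_comm (V a) (V b)⟩

variable {G V}

theorem pairDensity_nonneg (e : Sym2 α) : 0 ≤ pairDensity G V e := by
  induction e using Sym2.ind with
  | _ a b => exact G.edgeDensity_nonneg _ _

theorem pairDensity_le_one (e : Sym2 α) : pairDensity G V e ≤ 1 := by
  induction e using Sym2.ind with
  | _ a b => exact G.edgeDensity_le_one _ _

theorem forall_map_update_update_mem_iff [DecidableEq α] {F : Finset (Sym2 α)} {a b : α}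
    (hab : a ≠ b) (hF : s(a, b) ∉ F) (E : Set (Sym2 β)) (f : α → β) (x y : β) :
    (∀ e ∈ F, e.map (update (update f a x) b y) ∈ E) ↔
      (∀ e ∈ F, b ∉ e → e.map (update f a x) ∈ E) ∧
        (∀ e ∈ F, b ∈ e → e.map (update f b y) ∈ E) := by
  have map_of_notMem : ∀ e : Sym2 α, b ∉ e →
      e.map (update (update f a x) b y) = e.map (update f a x) := fun e hb ↦
    Sym2.map_congr fun z hz ↦ update_of_ne (by rintro rfl; exact hb hz) _ _
  have map_of_mem : ∀ e ∈ F, b ∈ e →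
      e.map (update (update f a x) b y) = e.map (update f b y) := fun e he hb ↦ by
    refine Sym2.map_congr fun z hz ↦ ?_
    have hza : z ≠ a := fun hza ↦ hF ((Sym2.mem_and_mem_iff hab).1 ⟨hza ▸ hz, hb⟩ ▸ he)
    rw [update_comm hab, update_of_ne hza]
  constructor
  · exact fun h ↦ ⟨fun e he hb ↦ map_of_notMem e hb ▸ h e he,
      fun e he hb ↦ map_of_mem e he hb ▸ h e he⟩
  · rintro ⟨h₁, h₂⟩ e he
    by_cases hb : b ∈ e
    · exact map_of_mem e he hb ▸ h₂ e he hb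
    · exact map_of_notMem e hb ▸ h₁ e he hb

variable [Fintype α] [DecidableEq α]

variable (G V) in
/-- The transversals `f` of the parts `V a` that send every pair in `F` to an edge of `G`, that is,
the copies in `G` of the graph with edge set `F` having each vertex `a` in its own part `V a`. -/
def transversalCopies (F : Finset (Sym2 α)) : Finset (α → β) :=
  {f ∈ Fintype.piFinset V | ∀ e ∈ F, e.map f ∈ G.edgeSet}

variable {ε : ℝ}

theorem abs_card_transversalCopies_insert_sub_le {F : Finset (Sym2 α)} {a b : α} (hab : a ≠ b)
    (hF : s(a, b) ∉ F) (hV : ∀ a, (V a).Nonempty) (hU : G.IsUniform ε (V a) (V b)) :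
    |(#(transversalCopies G V (insert s(a, b) F)) : ℝ) -
      G.edgeDensity (V a) (V b) * #(transversalCopies G V F)| ≤ ε * ∏ i, (#(V i) : ℝ) := by
  set d : ℝ := (G.edgeDensity (V a) (V b) : ℝ)
  let Φ (f : α → β) : ℝ := (if G.Adj (f a) (f b) ∧ ∀ e ∈ F, e.map f ∈ G.edgeSet then 1 else 0) -
    d * if ∀ e ∈ F, e.map f ∈ G.edgeSet then 1 else 0
  have sum_Φ : ∑ f ∈ Fintype.piFinset V, Φ f =
      #(transversalCopies G V (insert s(a, b) F)) - d * #(transversalCopies G V F) := by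
    simp only [Φ, sum_sub_distrib, ← mul_sum, sum_boole, transversalCopies, forall_mem_insert,
      Sym2.map_mk, SimpleGraph.mem_edgeSet]
  have resampled : ∀ f, |∑ x ∈ V a, ∑ y ∈ V b, Φ (update (update f a x) b y)| ≤
      ε * (#(V a) * #(V b)) := by
    intro f
    let A' : Finset β := {x ∈ V a | ∀ e ∈ F, b ∉ e → e.map (update f a x) ∈ G.edgeSet}
    let B' : Finset β := {y ∈ V b | ∀ e ∈ F, b ∈ e → e.map (update f b y) ∈ G.edgeSet}
    convert abs_card_interedges_sub_le hU (filter_subset _ _ : A' ⊆ V a)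
      (filter_subset _ _ : B' ⊆ V b) using 2
    simp only [Φ, forall_map_update_update_mem_iff hab hF, update_self, update_of_ne hab,
      sum_sub_distrib, ← mul_sum]
    rw [SimpleGraph.interedges_def, ← Nat.cast_mul, ← card_product, ← filter_product,
      filter_filter, ← sum_product', ← sum_product', sum_boole, sum_boole]
    simp only [and_comm, d]
  have hpos : (0 : ℝ) < #(V a) * #(V b) := by
    have := (hV a).card_pos
    have := (hV b).card_pos
    positivity
  refine le_of_mul_le_mul_left ?_ hpos
  rw [← sum_Φ]
  calc _ = |((#(V a) * #(V b)) • ∑ f ∈ Fintype.piFinset V, Φ f : ℝ)| := by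
        rw [nsmul_eq_mul, abs_mul, Nat.cast_mul, abs_of_pos hpos]
    _ ≤ ∑ _f ∈ Fintype.piFinset V, ε * (#(V a) * #(V b)) := by
        rw [← sum_piFinset_sum_update_update]
        exact (abs_sum_le_sum_abs _ _).trans (sum_le_sum fun f _ ↦ resampled f)
    _ = #(V a) * #(V b) * (ε * ∏ i, (#(V i) : ℝ)) := by
        simp [Fintype.card_piFinset]
        ring

theorem abs_card_transversalCopies_sub_le {F : Finset (Sym2 α)} (hV : ∀ a, (V a).Nonempty)
    (hF : ∀ a b, s(a, b) ∈ F → a ≠ b ∧ G.IsUniform ε (V a) (V b)) :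
    |(#(transversalCopies G V F) : ℝ) - (∏ e ∈ F, (pairDensity G V e : ℝ)) * ∏ i, (#(V i) : ℝ)| ≤
      #F * ε * ∏ i, (#(V i) : ℝ) := by
  induction F using Finset.induction_on with
  | empty => simp [transversalCopies, Fintype.card_piFinset]
  | insert e F he ih =>
    have ih := ih fun a b h ↦ hF a b (mem_insert_of_mem h)
    induction e using Sym2.ind with
    | _ a b =>
    obtain ⟨hab, hU⟩ := hF a b (mem_insert_self _ _)
    have hd0 : (0 : ℝ) ≤ G.edgeDensity (V a) (V b) := by exact_mod_cast G.edgeDensity_nonneg _ _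
    have hd1 : (G.edgeDensity (V a) (V b) : ℝ) ≤ 1 := by exact_mod_cast G.edgeDensity_le_one _ _
    have step := abs_card_transversalCopies_insert_sub_le hab he hV hU
    rw [prod_insert he, card_insert_of_notMem he]
    change |_ - (G.edgeDensity (V a) (V b) : ℝ) * _ * _| ≤ _
    set d : ℝ := (G.edgeDensity (V a) (V b) : ℝ)
    set Q := ∏ i, (#(V i) : ℝ)
    set P := ∏ e ∈ F, (pairDensity G V e : ℝ)
    calc _ ≤ |(#(transversalCopies G V (insert s(a, b) F)) : ℝ) -
            d * #(transversalCopies G V F)| + |d * #(transversalCopies G V F) - d * P * Q| :=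
          abs_sub_le _ _ _
      _ = |(#(transversalCopies G V (insert s(a, b) F)) : ℝ) - d * #(transversalCopies G V F)| +
            d * |#(transversalCopies G V F) - P * Q| := by
          rw [mul_assoc, ← mul_sub, abs_mul, abs_of_nonneg hd0]
      _ ≤ ε * Q + 1 * (#F * ε * Q) := by gcongr
      _ = (#F + 1 : ℕ) * ε * Q := by push_cast; ring

end CountingLemma

section RegularSelection

open Finset Function

variable {α β : Type*} [Fintype α] [Fintype β] [DecidableEq β]

theorem card_filter_pair_mem_le [DecidableEq α] [Nonempty β] {a b : α} (hab : a ≠ b)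
    {B : Finset (β × β)} {δ : ℝ} (hB : #B ≤ δ * Fintype.card β ^ 2) :
    (#{f : α → β | (f a, f b) ∈ B} : ℝ) ≤ δ * Fintype.card β ^ Fintype.card α := by
  have : (0 : ℝ) < Fintype.card β := by exact_mod_cast Fintype.card_pos
  have := card_piFinset_filter_pair_mul (fun _ : α ↦ (univ : Finset β)) hab (fun x y ↦ (x, y) ∈ B)
  simp only [Fintype.piFinset_univ, card_univ, univ_product_univ, Prod.mk.eta, prod_const,
    filter_univ_mem] at this
  have pairs_count : (#{f : α → β | (f a, f b) ∈ B} * Fintype.card β ^ 2 : ℝ) =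
      #B * Fintype.card β ^ Fintype.card α := by
    rw [sq]
    exact_mod_cast this
  refine le_of_mul_le_mul_right (a := (Fintype.card β : ℝ) ^ 2) ?_ (by positivity)
  rw [pairs_count, mul_right_comm]
  gcongr

theorem card_sub_le_card_filter_pairs_notMem [DecidableEq α] [Nonempty β] (S : Finset (α → β))
    {B : Finset (β × β)} {δ : ℝ} (hB : #B ≤ δ * Fintype.card β ^ 2) :
    #S - Fintype.card α ^ 2 * δ * Fintype.card β ^ Fintype.card α ≤
      (#{f ∈ S | ∀ a b, a ≠ b → (f a, f b) ∉ B} : ℝ) := by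
  have : (0 : ℝ) < Fintype.card β := by exact_mod_cast Fintype.card_pos
  have hδ : 0 ≤ δ := nonneg_of_mul_nonneg_left ((Nat.cast_nonneg _).trans hB) (by positivity)
  have card_pair_mem_le (ab : α × α) : (#{f : α → β | ab.1 ≠ ab.2 ∧ (f ab.1, f ab.2) ∈ B} : ℝ) ≤
      δ * Fintype.card β ^ Fintype.card α := by
    by_cases hab : ab.1 = ab.2
    · simp only [hab, ne_eq, not_true_eq_false, false_and, filter_false, card_empty, Nat.cast_zero]
      positivity
    · simpa only [ne_eq, hab, not_false_eq_true, true_and] using card_filter_pair_mem_le hab hB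
  have cover : S ⊆ {f ∈ S | ∀ a b, a ≠ b → (f a, f b) ∉ B} ∪
      univ.biUnion fun ab : α × α ↦ {f : α → β | ab.1 ≠ ab.2 ∧ (f ab.1, f ab.2) ∈ B} := by
    intro f hf
    by_contra! h
    simp only [mem_union, mem_filter, hf, true_and, mem_biUnion, mem_univ, not_or, not_exists,
      not_and, Prod.forall] at h
    exact h.1 h.2
  have hcard := (card_le_card cover).trans ((card_union_le _ _).trans
    (Nat.add_le_add_left card_biUnion_le _))
  have hcard' : (#S : ℝ) ≤ #{f ∈ S | ∀ a b, a ≠ b → (f a, f b) ∉ B} +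
      ∑ ab : α × α, (#{f : α → β | ab.1 ≠ ab.2 ∧ (f ab.1, f ab.2) ∈ B} : ℝ) := by
    exact_mod_cast hcard
  have hsum := sum_le_card_nsmul univ _ _ fun ab _ ↦ card_pair_mem_le ab
  simp only [card_univ, Fintype.card_prod, nsmul_eq_mul, Nat.cast_mul] at hsum
  linarith

theorem exists_mem_mul_prod_card_part_le (P : Finpartition (univ : Finset β))
    {S : Finset (α → β)} (hS : S.Nonempty) {c : ℝ} (hc : 0 ≤ c)
    (hcS : c * Fintype.card β ^ Fintype.card α ≤ #S) :
    ∃ f ∈ S, c * ∏ a, (#(P.part (f a)) : ℝ) ≤ #{g ∈ S | ∀ a, g a ∈ P.part (f a)} := by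
  classical
  by_contra! hcon
  let T (f : α → β) (a : α) : Finset β := P.part (f a)
  have T_mem : ∀ C ∈ S.image T, C ∈ Fintype.piFinset fun _ ↦ P.parts := by
    intro C hC
    obtain ⟨f, -, rfl⟩ := mem_image.1 hC
    exact Fintype.mem_piFinset.2 fun a ↦ P.part_mem.2 (mem_univ _)
  have fiber_lt : ∀ C ∈ S.image T, (#{g ∈ S | T g = C} : ℝ) < c * ∏ a, (#(C a) : ℝ) := by
    intro C hC
    obtain ⟨f, hf, rfl⟩ := mem_image.1 hC
    refine lt_of_le_of_lt ?_ (hcon f hf)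
    gcongr with g
    intro hg a
    have part_eq : P.part (g a) = P.part (f a) := congrFun hg a
    exact part_eq ▸ P.mem_part (mem_univ _)
  refine hcS.not_gt ?_
  calc (#S : ℝ) = ∑ C ∈ S.image T, (#{g ∈ S | T g = C} : ℝ) := by
        exact_mod_cast card_eq_sum_card_image T S
    _ < ∑ C ∈ S.image T, c * ∏ a, (#(C a) : ℝ) := sum_lt_sum_of_nonempty (hS.image T) fiber_lt
    _ ≤ ∑ C ∈ Fintype.piFinset fun _ : α ↦ P.parts, c * ∏ a, (#(C a) : ℝ) :=
        sum_le_sum_of_subset_of_nonneg T_mem fun _ _ _ ↦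
          mul_nonneg hc (prod_nonneg fun _ _ ↦ Nat.cast_nonneg _)
    _ = c * Fintype.card β ^ Fintype.card α := by
        rw [← mul_sum, ← prod_univ_sum (fun _ : α ↦ P.parts) fun _ C ↦ (#C : ℝ), prod_const,
          ← Nat.cast_sum, P.sum_card_parts, card_univ, card_univ]

/-- The pairs of distinct vertices that share a part of `P` or lie in a pair of parts that is not
`ε`-uniform. A tuple of vertices avoiding them meets distinct and pairwise `ε`-uniform parts. -/
noncomputable def irregularPairs (P : Finpartition (univ : Finset β)) (G : SimpleGraph β)
    [DecidableRel G.Adj] (ε : ℝ) : Finset (β × β) :=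
  P.parts.biUnion offDiag ∪ (P.nonUniforms G ε).biUnion fun (U, V) ↦ U ×ˢ V

variable {P : Finpartition (univ : Finset β)} {G : SimpleGraph β} [DecidableRel G.Adj] {ε : ℝ}

theorem card_irregularPairs_le [Nonempty β] (hε : 0 < ε) (hP : P.IsEquipartition)
    (hparts : 4 / ε ≤ #P.parts) (hU : P.IsUniform G ε) :
    #(irregularPairs P G ε) ≤ 5 * ε * Fintype.card β ^ 2 := by
  have same_part := hP.card_biUnion_offDiag_le hε hparts
  have nonUniform := hP.sum_nonUniforms_lt univ_nonempty hε hU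
  rw [card_univ] at same_part nonUniform
  have : (#(irregularPairs P G ε) : ℝ) ≤ #(P.parts.biUnion offDiag) +
      #((P.nonUniforms G ε).biUnion fun (U, V) ↦ U ×ˢ V) := by
    exact_mod_cast card_union_le _ _
  have : 0 ≤ ε * (Fintype.card β : ℝ) ^ 2 := by positivity
  linarith

theorem part_ne_part_of_notMem_irregularPairs {x y : β} (hxy : x ≠ y)
    (h : (x, y) ∉ irregularPairs P G ε) : P.part x ≠ P.part y := fun heq ↦
  h <| mem_union_left _ <| mem_biUnion.2 ⟨P.part x, P.part_mem.2 (mem_univ x), mem_offDiag.2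
    ⟨P.mem_part (mem_univ x), heq ▸ P.mem_part (mem_univ y), hxy⟩⟩

theorem isUniform_of_notMem_irregularPairs {x y : β} (hxy : x ≠ y)
    (h : (x, y) ∉ irregularPairs P G ε) : G.IsUniform ε (P.part x) (P.part y) := by
  by_contra hU
  refine h <| mem_union_right _ <| mem_biUnion.2 ⟨(P.part x, P.part y), ?_, mem_product.2
    ⟨P.mem_part (mem_univ x), P.mem_part (mem_univ y)⟩⟩
  exact (P.mk_mem_nonUniforms G).2 ⟨P.part_mem.2 (mem_univ x), P.part_mem.2 (mem_univ y),
    part_ne_part_of_notMem_irregularPairs hxy h, hU⟩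

theorem card_le_two_mul_card_part (hP : P.IsEquipartition) {M : ℕ} (hPM : #P.parts ≤ M)
    (hM : M ≤ Fintype.card β) (x : β) : Fintype.card β ≤ 2 * M * #(P.part x) := by
  have hx : P.part x ∈ P.parts := P.part_mem.2 (mem_univ x)
  have hparts : 0 < #P.parts := card_pos.2 ⟨_, hx⟩
  have average : Fintype.card β / #P.parts ≤ #(P.part x) := hP.average_le_card_part hx
  have : 1 ≤ Fintype.card β / #P.parts := (Nat.one_le_div_iff hparts).2 (hPM.trans hM)
  calc Fintype.card β ≤ #P.parts * (Fintype.card β / #P.parts + 1) :=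
        (Nat.lt_mul_div_succ _ hparts).le
    _ ≤ M * (2 * #(P.part x)) := Nat.mul_le_mul hPM (by lia)
    _ = 2 * M * #(P.part x) := by ring

theorem exists_uniform_parts_mul_prod_card_le_card_filter (α : Type*) [Fintype α] {ε : ℝ}
    (hε : 0 < ε) :
    ∃ M > 0, ∀ {β : Type*} [Fintype β] [DecidableEq β] (G : SimpleGraph β) [DecidableRel G.Adj]
      (S : Finset (α → β)) (η : ℝ), M ≤ Fintype.card β → (∀ f ∈ S, Injective f) →
      5 * Fintype.card α ^ 2 * ε < η → η * Fintype.card β ^ Fintype.card α ≤ #S →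
      ∃ V : α → Finset β, Pairwise (fun a b ↦ Disjoint (V a) (V b)) ∧
        Pairwise (fun a b ↦ G.IsUniform ε (V a) (V b)) ∧
        (∀ a, Fintype.card β ≤ 2 * M * #(V a)) ∧
        (η - 5 * Fintype.card α ^ 2 * ε) * ∏ a, (#(V a) : ℝ) ≤ #{f ∈ S | ∀ a, f a ∈ V a} := by
  classical
  let l := ⌈4 / ε⌉₊
  refine ⟨max (max l (SzemerediRegularity.bound ε l)) 1, by simp,
    fun {β} _ _ G _ S η hM hS hη hηS ↦ ?_⟩
  have : Nonempty β := Fintype.card_pos_iff.1 (by lia)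
  obtain ⟨P, hPe, hPl, hPb, hPU⟩ := szemeredi_regularity G hε (show l ≤ Fintype.card β by lia)
  set c := η - 5 * Fintype.card α ^ 2 * ε
  have hc : 0 < c := sub_pos.2 hη
  set S' := {f ∈ S | ∀ a b, a ≠ b → (f a, f b) ∉ irregularPairs P G ε}
  have hS' : c * Fintype.card β ^ Fintype.card α ≤ #S' := by
    have := card_sub_le_card_filter_pairs_notMem S
      (card_irregularPairs_le hε hPe ((Nat.le_ceil _).trans (by exact_mod_cast hPl)) hPU)
    linarith
  have hS'pos : (0 : ℝ) < #S' := hS'.trans_lt' (by positivity)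
  obtain ⟨f, hfS', hf⟩ := exists_mem_mul_prod_card_part_le P (card_pos.1 (by exact_mod_cast hS'pos))
    hc.le hS'
  obtain ⟨hfS, hf_regular⟩ := mem_filter.1 hfS'
  have hf_ne {a b : α} (hab : a ≠ b) : f a ≠ f b := (hS f hfS).ne hab
  refine ⟨fun a ↦ P.part (f a), fun a b hab ↦ ?_, fun a b hab ↦ ?_, fun a ↦ ?_, hf.trans ?_⟩
  · exact P.disjoint (P.part_mem.2 (mem_univ _)) (P.part_mem.2 (mem_univ _))
      (part_ne_part_of_notMem_irregularPairs (hf_ne hab) (hf_regular a b hab))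
  · exact isUniform_of_notMem_irregularPairs (hf_ne hab) (hf_regular a b hab)
  · exact card_le_two_mul_card_part hPe (by lia) hM (f a)
  · gcongr
    exact filter_subset _ _

end RegularSelection

section ExtensionDensity

open Finset Function

variable {α β : Type*} [Fintype α] [DecidableEq α] [DecidableEq β]

/-- The proportion of the ways to complete `φ`, prescribed on `A`, by vertices of the sets `V b`,
`b ∉ A`, that yield a member of `K`. -/
noncomputable def extensionDensity (V : α → Finset β) (K : Finset (α → β)) (A : Finset α)
    (φ : α → β) : ℝ :=
  #{g ∈ K | ∀ a ∈ A, g a = φ a} / ∏ b ∈ Aᶜ, (#(V b) : ℝ)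

variable {V : α → Finset β} {K : Finset (α → β)} {A : Finset α} {a b : α} {φ : α → β}

theorem extensionDensity_nonneg : 0 ≤ extensionDensity V K A φ :=
  div_nonneg (Nat.cast_nonneg _) (prod_nonneg fun _ _ ↦ Nat.cast_nonneg _)

theorem extensionDensity_le_one (hK : K ⊆ Fintype.piFinset V) : extensionDensity V K A φ ≤ 1 := by
  have hsub : {g ∈ K | ∀ a ∈ A, g a = φ a} ⊆
      Fintype.piFinset fun a ↦ if a ∈ A then {φ a} else V a := fun g hg ↦ by
    obtain ⟨hgK, hgA⟩ := mem_filter.1 hg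
    refine Fintype.mem_piFinset.2 fun a ↦ ?_
    split_ifs with ha
    · exact mem_singleton.2 (hgA a ha)
    · exact Fintype.mem_piFinset.1 (hK hgK) a
  have hcard : #(Fintype.piFinset fun a ↦ if a ∈ A then {φ a} else V a) = ∏ b ∈ Aᶜ, #(V b) := by
    rw [Fintype.card_piFinset, ← prod_mul_prod_compl A, prod_eq_one, one_mul]
    · exact prod_congr rfl fun b hb ↦ by rw [if_neg (mem_compl.1 hb)]
    · exact fun a ha ↦ by rw [if_pos ha, card_singleton]
  refine div_le_one_of_le₀ ?_ (prod_nonneg fun _ _ ↦ Nat.cast_nonneg _)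
  exact_mod_cast hcard ▸ card_le_card hsub

theorem exists_mem_of_extensionDensity_pos (h : 0 < extensionDensity V K A φ) :
    ∃ g ∈ K, ∀ a ∈ A, g a = φ a := by
  by_contra! hcon
  rw [extensionDensity, filter_eq_empty_iff.2 fun g hg hgA ↦ ?_] at h
  · simp at h
  · obtain ⟨a, ha, hne⟩ := hcon g hg
    exact hne (hgA a ha)

theorem extensionDensity_empty : extensionDensity V K ∅ φ = #K / ∏ b, (#(V b) : ℝ) := by
  simp [extensionDensity]

theorem extensionDensity_univ : extensionDensity V K univ φ = if φ ∈ K then 1 else 0 := by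
  have hfilter : {g ∈ K | ∀ a ∈ univ, g a = φ a} = {g ∈ K | g = φ} :=
    filter_congr fun g _ ↦ by simp [funext_iff]
  rw [extensionDensity, hfilter, filter_eq']
  split_ifs <;> simp

theorem sum_extensionDensity_insert (hK : K ⊆ Fintype.piFinset V) (hb : b ∉ A) :
    ∑ v ∈ V b, extensionDensity V K (insert b A) (update φ b v) =
      #(V b) * extensionDensity V K A φ := by
  have hfiber (v : β) : {g ∈ K | ∀ a ∈ insert b A, g a = update φ b v a} =
      {g ∈ {g ∈ K | ∀ a ∈ A, g a = φ a} | g b = v} := by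
    have (g : α → β) : (∀ a ∈ A, g a = update φ b v a) ↔ ∀ a ∈ A, g a = φ a :=
      forall₂_congr fun a ha ↦ by rw [update_of_ne (ne_of_mem_of_not_mem ha hb)]
    simp only [filter_filter, forall_mem_insert, update_self, this, and_comm]
  have hcount : #{g ∈ K | ∀ a ∈ A, g a = φ a} =
      ∑ v ∈ V b, #{g ∈ K | ∀ a ∈ insert b A, g a = update φ b v a} := by
    simp only [hfiber]
    exact card_eq_sum_card_fiberwise fun g hg ↦
      Fintype.mem_piFinset.1 (hK (mem_filter.1 hg).1) b
  have hprod : ∏ c ∈ Aᶜ, (#(V c) : ℝ) = #(V b) * ∏ c ∈ (insert b A)ᶜ, (#(V c) : ℝ) := by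
    rw [compl_insert, mul_prod_erase _ (fun c ↦ (#(V c) : ℝ)) (mem_compl.2 hb)]
  simp only [extensionDensity]
  rcases eq_or_ne (#(V b) : ℝ) 0 with h0 | h0
  · have : V b = ∅ := card_eq_zero.1 (by exact_mod_cast h0)
    simp [this]
  · rw [← sum_div, hprod, hcount, Nat.cast_sum, ← mul_div_assoc, mul_div_mul_left _ _ h0]

theorem sum_sum_extensionDensity_pair (hK : K ⊆ Fintype.piFinset V) (hab : a ≠ b) :
    ∑ x ∈ V a, ∑ y ∈ V b, extensionDensity V K {b, a} (update (update φ a x) b y) =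
      #(V a) * #(V b) * (#K / ∏ c, (#(V c) : ℝ)) := by
  simp_rw [sum_extensionDensity_insert hK (notMem_singleton.2 hab.symm), ← mul_sum,
    ← insert_empty_eq a, sum_extensionDensity_insert hK (notMem_empty a), extensionDensity_empty]
  ring

end ExtensionDensity

section PartialBlowup

open Finset Function

variable {ι α β : Type*}

/-- The rows `φ j`, `j ∈ J`, form a blowup in `G` of the subgraph of `H` induced by `A`: the vertex
`a ∈ A` is replaced by the column `{φ j a | j ∈ J}`. Disjointness of the columns is not part of the
definition. -/
structure IsPartialBlowup (H : SimpleGraph α) (G : SimpleGraph β) (A : Finset α) (J : Finset ι)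
    (φ : ι → α → β) : Prop where
  injOn : ∀ a ∈ A, Set.InjOn (fun j ↦ φ j a) J
  adj : ∀ a ∈ A, ∀ b ∈ A, H.Adj a b → ∀ i ∈ J, ∀ j ∈ J, G.Adj (φ i a) (φ j b)

namespace IsPartialBlowup

variable {H : SimpleGraph α} {G : SimpleGraph β} {A B : Finset α} {J J' : Finset ι}
  {φ : ι → α → β}

theorem mono (h : IsPartialBlowup H G A J φ) (hJ : J' ⊆ J) : IsPartialBlowup H G A J' φ where
  injOn a ha := (h.injOn a ha).mono hJ
  adj a ha b hb hab i hi j hj := h.adj a ha b hb hab i (hJ hi) j (hJ hj)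

theorem insert_column [DecidableEq α] (h : IsPartialBlowup H G A J φ) {b : α} (hb : b ∉ A)
    {u : ι → β} (hu : Set.InjOn u J)
    (hadj : ∀ a ∈ A, H.Adj a b → ∀ i ∈ J, ∀ j ∈ J, G.Adj (φ i a) (u j)) :
    IsPartialBlowup H G (insert b A) J fun j ↦ update (φ j) b (u j) where
  injOn := by
    refine (forall_mem_insert _ _ _).2 ⟨by simpa using hu, fun a ha ↦ ?_⟩
    simpa only [update_of_ne (ne_of_mem_of_not_mem ha hb)] using h.injOn a ha
  adj := by
    refine (forall_mem_insert _ _ _).2 ⟨(forall_mem_insert _ _ _).2 ⟨fun hbb ↦ ?_, ?_⟩,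
      fun a ha ↦ (forall_mem_insert _ _ _).2 ⟨?_, ?_⟩⟩
    · exact (H.irrefl hbb).elim
    · intro c hc hbc i hi j hj
      rw [update_self, update_of_ne (ne_of_mem_of_not_mem hc hb)]
      exact (hadj c hc hbc.symm j hj i hi).symm
    · intro hab i hi j hj
      rw [update_self, update_of_ne (ne_of_mem_of_not_mem ha hb)]
      exact hadj a ha hab i hi j hj
    · intro c hc hac i hi j hj
      rw [update_of_ne (ne_of_mem_of_not_mem ha hb), update_of_ne (ne_of_mem_of_not_mem hc hb)]
      exact h.adj a ha c hc hac i hi j hj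

theorem containsCopy {α β : Type} [Fintype α] {H : SimpleGraph α} {G : SimpleGraph β}
    {φ : ι → α → β} (h : IsPartialBlowup H G univ J φ) {V : α → Finset β}
    (hV : Pairwise fun a b ↦ Disjoint (V a) (V b)) (hφ : ∀ j ∈ J, ∀ a, φ j a ∈ V a) {t : ℕ}
    (ht : t ≤ #J) : ContainsCopy (blowupGraph H t) G := by
  obtain ⟨e⟩ : Nonempty (Fin t ↪ J) := Embedding.nonempty_of_card_le (by simpa using ht)
  refine ⟨fun p ↦ φ (e p.2) p.1, ?_, fun p q hpq ↦
    h.adj _ (mem_univ _) _ (mem_univ _) hpq _ (e p.2).2 _ (e q.2).2⟩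
  rintro ⟨a, i⟩ ⟨b, j⟩ (heq : φ (e i) a = φ (e j) b)
  obtain rfl : a = b := by
    by_contra hab
    exact disjoint_left.1 (hV hab) (hφ _ (e i).2 a) (heq ▸ hφ _ (e j).2 b)
  have hij : (e i : ι) = e j := h.injOn a (mem_univ a) (e i).2 (e j).2 heq
  rw [e.injective (Subtype.ext hij)]

variable [Fintype α] [DecidableEq α] [DecidableEq β] {V : α → Finset β} {K : Finset (α → β)} {τ : ℝ}

theorem exists_insert (h : IsPartialBlowup H G A J φ) (hK : K ⊆ Fintype.piFinset V)
    (hKH : ∀ g ∈ K, ∀ a b, H.Adj a b → G.Adj (g a) (g b)) {b : α} (hb : b ∉ A)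
    (hV : (V b).Nonempty) (hJV : 2 ^ #J * #J ^ 2 ≤ #(V b))
    (hτ : τ ≤ ∑ j ∈ J, extensionDensity V K A (φ j)) :
    ∃ J' ⊆ J, ∃ φ' : ι → α → β, IsPartialBlowup H G (insert b A) J' φ' ∧
      τ - 1 ≤ ∑ j ∈ J', extensionDensity V K (insert b A) (φ' j) := by
  obtain ⟨J', hJ', u, -, huinj, hpos, hsum⟩ := exists_subset_injOn_sub_one_le_sum hV hJV
    (f := fun j v ↦ extensionDensity V K (insert b A) (update (φ j) b v)) (τ := τ)
    (fun _ _ ↦ extensionDensity_nonneg) (fun _ _ ↦ extensionDensity_le_one hK) <| by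
      simp_rw [sum_extensionDensity_insert hK hb, ← mul_sum, mul_comm τ]
      gcongr
  refine ⟨J', hJ', _, (h.mono hJ').insert_column hb huinj fun a ha hab i hi j hj ↦ ?_, hsum⟩
  obtain ⟨g, hgK, hg⟩ := exists_mem_of_extensionDensity_pos (hpos i hi j hj)
  have hga : g a = φ i a := by
    rw [hg a (mem_insert_of_mem ha), update_of_ne (ne_of_mem_of_not_mem ha hb)]
  have hgb : g b = u j := by rw [hg b (mem_insert_self b A), update_self]
  exact hga ▸ hgb ▸ hKH g hgK a b hab

theorem exists_union (h : IsPartialBlowup H G A J φ) (hK : K ⊆ Fintype.piFinset V)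
    (hKH : ∀ g ∈ K, ∀ a b, H.Adj a b → G.Adj (g a) (g b)) (hAB : Disjoint B A)
    (hV : ∀ b ∈ B, (V b).Nonempty) (hJV : ∀ b ∈ B, 2 ^ #J * #J ^ 2 ≤ #(V b))
    (hτ : τ ≤ ∑ j ∈ J, extensionDensity V K A (φ j)) :
    ∃ J' ⊆ J, ∃ φ' : ι → α → β, IsPartialBlowup H G (B ∪ A) J' φ' ∧
      τ - #B ≤ ∑ j ∈ J', extensionDensity V K (B ∪ A) (φ' j) := by
  induction B using Finset.induction_on with
  | empty => exact ⟨J, Subset.rfl, φ, by simpa using h, by simpa using hτ⟩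
  | insert b B hbB ih =>
    rw [disjoint_insert_left] at hAB
    rw [forall_mem_insert] at hV hJV
    obtain ⟨J₁, hJ₁, φ₁, h₁, hτ₁⟩ := ih hAB.2 hV.2 hJV.2
    have hJV₁ : 2 ^ #J₁ * #J₁ ^ 2 ≤ #(V b) := hJV.1.trans' <| by
      have := card_le_card hJ₁
      gcongr
      norm_num
    obtain ⟨J₂, hJ₂, φ₂, h₂, hτ₂⟩ :=
      h₁.exists_insert hK hKH (by simp [hbB, hAB.1]) hV.1 hJV₁ hτ₁
    refine ⟨J₂, hJ₂.trans hJ₁, φ₂, by rwa [insert_union], ?_⟩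
    rw [insert_union, card_insert_of_notMem hbB, Nat.cast_succ]
    linarith

end IsPartialBlowup

variable [Fintype α] [DecidableEq α] [DecidableEq β] {H : SimpleGraph α} {G : SimpleGraph β}
  [DecidableRel G.Adj] {V : α → Finset β} {K : Finset (α → β)} {a b : α} {θ κ : ℝ}

theorem exists_isPartialBlowup_pair [Fintype ι] [Nonempty ι] (hK : K ⊆ Fintype.piFinset V)
    (hKH : ∀ g ∈ K, ∀ a b, H.Adj a b → G.Adj (g a) (g b)) (hab : H.Adj a b) (hθ : 0 ≤ θ)
    (hκ : 0 ≤ κ) (hsum : κ + θ * G.edgeDensity (V a) (V b) ≤ #K / ∏ c, (#(V c) : ℝ))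
    (hV : ∀ c, 2 * (Fintype.card ι : ℝ) ^ 2 < κ ^ Fintype.card ι * #(V c)) :
    ∃ φ : ι → α → β, IsPartialBlowup H G {b, a} univ φ ∧
      θ * Fintype.card ι ≤ ∑ j, extensionDensity V K {b, a} (φ j) := by
  have hVa : 0 < (#(V a) : ℝ) :=
    pos_of_mul_pos_right (lt_of_le_of_lt (by positivity) (hV a)) (by positivity)
  obtain ⟨x₀, -⟩ := card_pos.1 (Nat.cast_pos.1 hVa)
  let row (x y : β) : α → β := update (update (fun _ ↦ x₀) a x) b y
  let h (x y : β) : ℝ := extensionDensity V K {b, a} (row x y) - if G.Adj x y then θ else 0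
  have row_left (x y : β) : row x y a = x := by simp [row, hab.ne]
  have row_right (x y : β) : row x y b = y := by simp [row]
  have h_le_one (x y : β) : h x y ≤ 1 := sub_le_iff_le_add.2 <|
    (extensionDensity_le_one hK).trans (le_add_of_nonneg_right (by positivity))
  have h_eq_zero (x y : β) (hxy : ¬ G.Adj x y) : h x y = 0 := by
    have : extensionDensity V K {b, a} (row x y) = 0 := by
      by_contra hne
      obtain ⟨g, hgK, hg⟩ :=
        exists_mem_of_extensionDensity_pos (extensionDensity_nonneg.lt_of_ne' hne)
      have := hKH g hgK a b hab
      rw [hg a (by simp), hg b (by simp), row_left, row_right] at this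
      exact hxy this
    simp [h, this, hxy]
  have h_sum : κ * (#(V a) * #(V b)) ≤ ∑ x ∈ V a, ∑ y ∈ V b, h x y := by
    simp only [h, sum_sub_distrib]
    rw [sum_sum_extensionDensity_pair hK hab.ne, sum_sum_ite_adj]
    have : 0 ≤ (#(V a) : ℝ) * #(V b) := by positivity
    linarith [mul_le_mul_of_nonneg_left hsum this]
  obtain ⟨x, y, hx, hy, -, -, hadj, hnonneg⟩ :=
    exists_biclique_sum_nonneg (ι := ι) h_le_one h_eq_zero hκ h_sum (hV a) (hV b)
  refine ⟨fun i ↦ row (x i) (y i), ⟨?_, ?_⟩, ?_⟩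
  · simpa [row_left, row_right] using ⟨hy, hx⟩
  · simp only [mem_insert, mem_singleton, mem_univ, forall_const, forall_eq_or_imp, forall_eq,
      row_left, row_right, SimpleGraph.irrefl, false_implies, true_and, and_true]
    exact ⟨fun _ i j ↦ (hadj j i).symm, fun _ i j ↦ hadj i j⟩
  · simpa [h, hadj, sum_sub_distrib, mul_comm] using hnonneg

theorem containsCopy_blowupGraph_of_add_mul_edgeDensity_le {α β : Type} [Fintype α]
    [DecidableEq α] {H : SimpleGraph α} {G : SimpleGraph β} [DecidableRel G.Adj]
    {V : α → Finset β} {K : Finset (α → β)} {a b : α}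
    (hdisj : Pairwise fun a b ↦ Disjoint (V a) (V b)) (hK : K ⊆ Fintype.piFinset V)
    (hKH : ∀ g ∈ K, ∀ a b, H.Adj a b → G.Adj (g a) (g b)) (hab : H.Adj a b) (hθ : 0 ≤ θ)
    (hκ : 0 ≤ κ) (hκ' : κ ≤ 1 / 2)
    (hsum : κ + θ * G.edgeDensity (V a) (V b) ≤ #K / ∏ c, (#(V c) : ℝ)) {s t : ℕ} (hs : s ≠ 0)
    (hV : ∀ c, 2 * (s : ℝ) ^ 2 < κ ^ s * #(V c)) (ht : t ≤ θ * s - Fintype.card α) :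
    ContainsCopy (blowupGraph H t) G := by
  classical
  have : Nonempty (Fin s) := Fin.pos_iff_nonempty.1 (Nat.pos_of_ne_zero hs)
  have hV_nonempty (c : α) : (V c).Nonempty := card_pos.1 <| Nat.cast_pos.1 <|
    pos_of_mul_pos_right (lt_of_le_of_lt (by positivity) (hV c)) (pow_nonneg hκ s)
  have hV_large (c : α) : 2 ^ s * s ^ 2 ≤ #(V c) := by
    have hpow : 2 ^ s * κ ^ s ≤ 1 := by
      rw [← mul_pow]
      exact pow_le_one₀ (by positivity) (by linarith)
    have : (2 ^ s * s ^ 2 : ℝ) ≤ #(V c) := calc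
      _ ≤ 2 ^ s * (κ ^ s * #(V c)) := by
        gcongr
        exact (hV c).le.trans' (by linarith [sq_nonneg (s : ℝ)])
      _ = 2 ^ s * κ ^ s * #(V c) := by ring
      _ ≤ #(V c) := mul_le_of_le_one_left (Nat.cast_nonneg _) hpow
    exact_mod_cast this
  obtain ⟨φ, hφ, hφ_sum⟩ := exists_isPartialBlowup_pair (ι := Fin s) hK hKH hab hθ hκ hsum
    (by simpa using hV)
  obtain ⟨J, -, ψ, hψ, hψ_sum⟩ := hφ.exists_union hK hKH (disjoint_compl_left (a := {b, a}))
    (fun c _ ↦ hV_nonempty c) (fun c _ ↦ by simpa using hV_large c) hφ_sum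
  rw [union_comm, union_compl] at hψ hψ_sum
  simp only [extensionDensity_univ, sum_boole] at hψ_sum
  refine (hψ.mono (filter_subset (ψ · ∈ K) J)).containsCopy hdisj
    (fun j hj ↦ Fintype.mem_piFinset.1 (hK (mem_filter.1 hj).2)) ?_
  have hcompl : (#({b, a}ᶜ : Finset α) : ℝ) ≤ Fintype.card α := by exact_mod_cast card_le_univ _
  rw [Fintype.card_fin] at hψ_sum
  exact_mod_cast (by linarith : (t : ℝ) ≤ #{j ∈ J | ψ j ∈ K})

end PartialBlowup

section Threshold

open Finset Function

theorem exists_le_prod_rpow_inv_card {ι : Type*} {s : Finset ι} (hs : s.Nonempty) {f : ι → ℝ}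
    (hf : ∀ i ∈ s, 0 ≤ f i) : ∃ i ∈ s, f i ≤ (∏ j ∈ s, f j) ^ (#s : ℝ)⁻¹ := by
  obtain ⟨i, hi, hmin⟩ := exists_min_image s f hs
  refine ⟨i, hi, ?_⟩
  calc f i = (∏ _j ∈ s, f i) ^ (#s : ℝ)⁻¹ := by
        rw [prod_const, Real.pow_rpow_inv_natCast (hf i hi) hs.card_ne_zero]
    _ ≤ (∏ j ∈ s, f j) ^ (#s : ℝ)⁻¹ := by
        gcongr with j hj
        · exact prod_nonneg fun _ _ ↦ hf i hi
        · exact fun _ _ ↦ hf i hi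
        · exact hmin j hj

theorem rpow_one_sub_mul_le {p q d r : ℝ} (hq : 0 < q) (hqp : q ≤ p) (hd : d ≤ p ^ r)
    (hr : r ≤ 1) : q ^ (1 - r) * d ≤ p := by
  have hp : 0 < p := hq.trans_le hqp
  have : 0 ≤ 1 - r := sub_nonneg.2 hr
  calc q ^ (1 - r) * d ≤ q ^ (1 - r) * p ^ r := by gcongr
    _ ≤ p ^ (1 - r) * p ^ r := by gcongr
    _ = p := by rw [← Real.rpow_add hp, sub_add_cancel, Real.rpow_one]

theorem containsCopy_blowupGraph_of_isUniform {α β : Type} [Fintype α] [DecidableEq α]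
    {H : SimpleGraph α} [Fintype H.edgeSet] (hH : H.edgeFinset.Nonempty)
    {G : SimpleGraph β} [DecidableRel G.Adj] {V : α → Finset β}
    (hdisj : Pairwise fun a b ↦ Disjoint (V a) (V b)) {ε : ℝ}
    (hU : Pairwise fun a b ↦ G.IsUniform ε (V a) (V b)) {q κ : ℝ} (hq : 0 < q)
    (hcount : (q + #H.edgeFinset * ε) * ∏ a, (#(V a) : ℝ) ≤ #(transversalCopies G V H.edgeFinset))
    (hκ : 0 ≤ κ) (hκq : κ + #H.edgeFinset * ε ≤ q / 6) {s t : ℕ} (hs : s ≠ 0)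
    (hV : ∀ a, 2 * (s : ℝ) ^ 2 < κ ^ s * #(V a))
    (ht : t ≤ 5 / 6 * q ^ (1 - (#H.edgeFinset : ℝ)⁻¹) * s - Fintype.card α) :
    ContainsCopy (blowupGraph H t) G := by
  set F := H.edgeFinset
  set W := ∏ a, (#(V a) : ℝ)
  set P := ∏ e ∈ F, (pairDensity G V e : ℝ)
  have hVpos (a : α) : (0 : ℝ) < #(V a) :=
    pos_of_mul_pos_right (lt_of_le_of_lt (by positivity) (hV a)) (pow_nonneg hκ s)
  have hWpos : 0 < W := prod_pos fun a _ ↦ hVpos a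
  have hF (a b : α) (h : s(a, b) ∈ F) : H.Adj a b := by simpa [F] using h
  obtain ⟨count_ge, count_le⟩ := abs_le.1 <| abs_card_transversalCopies_sub_le
    (fun a ↦ card_pos.1 (Nat.cast_pos.1 (hVpos a))) fun a b h ↦ ⟨(hF a b h).ne, hU (hF a b h).ne⟩
  have hqP : q ≤ P := le_of_mul_le_mul_right (by linarith) hWpos
  have hP1 : P ≤ 1 := prod_le_one (fun e _ ↦ by exact_mod_cast pairDensity_nonneg e)
    fun e _ ↦ by exact_mod_cast pairDensity_le_one e
  obtain ⟨e, heF, he⟩ := exists_le_prod_rpow_inv_card hH (f := fun e ↦ (pairDensity G V e : ℝ))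
    fun e _ ↦ by exact_mod_cast pairDensity_nonneg e
  induction e using Sym2.ind with
  | _ a b =>
  have hab : H.Adj a b := hF a b heF
  have hmε : 0 ≤ #F * ε := mul_nonneg (Nat.cast_nonneg _) (hU hab.ne).pos.le
  have sparse_edge : q ^ (1 - (#F : ℝ)⁻¹) * G.edgeDensity (V a) (V b) ≤ P :=
    rpow_one_sub_mul_le hq hqP he (Nat.cast_inv_le_one _)
  refine containsCopy_blowupGraph_of_add_mul_edgeDensity_le
    (K := transversalCopies G V F) hdisj (filter_subset _ _)
    (fun g hg c d hcd ↦ ?_) hab (by positivity) hκ (by linarith) ?_ hs hV ht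
  · exact (mem_filter.1 hg).2 s(c, d) (by simpa [F] using hcd)
  · calc κ + 5 / 6 * q ^ (1 - (#F : ℝ)⁻¹) * G.edgeDensity (V a) (V b) ≤ P - #F * ε := by linarith
      _ ≤ #(transversalCopies G V F) / W := by
        rw [le_div_iff₀ hWpos]
        linarith

theorem exp_neg_two_le : Real.exp (-2) ≤ 14 / 100 := by
  have h : (2.7 : ℝ) * 2.7 ≤ Real.exp 1 * Real.exp 1 := by
    have := Real.exp_one_gt_d9
    gcongr <;> linarith
  rw [← Real.exp_add, one_add_one_eq_two] at h
  rw [Real.exp_neg]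
  exact inv_le_of_inv_le₀ (by norm_num) (by linarith)

theorem exists_uniform_parts_mul_prod_card_le_card_transversalCopies {α : Type*} [Fintype α]
    [DecidableEq α] (F : Finset (Sym2 α)) (hF : F.Nonempty) {η : ℝ} (hη : 0 < η) :
    ∃ ε, #F * ε ≤ η / 100 ∧ ∃ M > 0, ∀ {β : Type*} [Fintype β] [DecidableEq β]
      (G : SimpleGraph β) [DecidableRel G.Adj], M ≤ Fintype.card β →
      η * (Fintype.card β : ℝ) ^ Fintype.card α ≤
        Nat.card {f : α → β // Injective f ∧ ∀ e ∈ F, e.map f ∈ G.edgeSet} →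
      ∃ V : α → Finset β, (Pairwise fun a b ↦ Disjoint (V a) (V b)) ∧
        (Pairwise fun a b ↦ G.IsUniform ε (V a) (V b)) ∧
        (∀ a, Fintype.card β ≤ 2 * M * #(V a)) ∧
        (99 / 100 * η + #F * ε) * ∏ a, (#(V a) : ℝ) ≤ #(transversalCopies G V F) := by
  have : (0 : ℝ) < #F := Nat.cast_pos.2 hF.card_pos
  let k : ℝ := Fintype.card α
  let ε : ℝ := η / 100 / (5 * k ^ 2 + #F)
  have hε : 0 < ε := by positivity
  have hε_mul : 5 * k ^ 2 * ε + #F * ε = η / 100 := by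
    rw [← add_mul, mul_div_cancel₀]
    positivity
  have hkε : 0 ≤ 5 * k ^ 2 * ε := by positivity
  have hmε : 0 ≤ #F * ε := by positivity
  obtain ⟨M, hM, hselect⟩ := exists_uniform_parts_mul_prod_card_le_card_filter α hε
  refine ⟨ε, by linarith, M, hM, fun {β} _ _ G _ hβ hcopies ↦ ?_⟩
  let S : Finset (α → β) := {f | Injective f ∧ ∀ e ∈ F, e.map f ∈ G.edgeSet}
  rw [Nat.card_eq_fintype_card, Fintype.card_subtype] at hcopies
  obtain ⟨V, hdisj, hU, hVcard, hcount⟩ := hselect G S η hβ (fun f hf ↦ (mem_filter.1 hf).2.1)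
    (by linarith) hcopies
  refine ⟨V, hdisj, hU, hVcard, ?_⟩
  have hsub : {f ∈ S | ∀ a, f a ∈ V a} ⊆ transversalCopies G V F := fun f hf ↦ by
    obtain ⟨hfS, hfV⟩ := mem_filter.1 hf
    exact mem_filter.2 ⟨Fintype.mem_piFinset.2 hfV, (mem_filter.1 hfS).2.2⟩
  calc (99 / 100 * η + #F * ε) * ∏ a, (#(V a) : ℝ)
      ≤ (η - 5 * k ^ 2 * ε) * ∏ a, (#(V a) : ℝ) :=
        mul_le_mul_of_nonneg_right (by linarith) (prod_nonneg fun _ _ ↦ Nat.cast_nonneg _)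
    _ ≤ #{f ∈ S | ∀ a, f a ∈ V a} := hcount
    _ ≤ #(transversalCopies G V F) := Nat.cast_le.2 (card_le_card hsub)

theorem forall_mem_edgeFinset_map_mem_edgeSet {α β : Type*} {H : SimpleGraph α}
    [Fintype H.edgeSet] {G : SimpleGraph β} {f : α → β} :
    (∀ e ∈ H.edgeFinset, e.map f ∈ G.edgeSet) ↔ ∀ a b, H.Adj a b → G.Adj (f a) (f b) := by
  simp [Sym2.forall]

theorem exists_forall_containsCopy_blowupGraph {α : Type} [Fintype α] {H : SimpleGraph α}
    (hH : ∃ x y, H.Adj x y) {η : ℝ} (hη : 0 < η) :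
    ∃ M : ℕ, ∀ {β : Type} [Fintype β] (G : SimpleGraph β) (s t : ℕ), M ≤ Fintype.card β →
      η * (Fintype.card β : ℝ) ^ Fintype.card α ≤ Nat.card {f : α → β // Injective f ∧
        ∀ x y, H.Adj x y → G.Adj (f x) (f y)} →
      s ≠ 0 → 4 * M * (s : ℝ) ^ 2 < (η * Real.exp (-2)) ^ s * Fintype.card β →
      t ≤ 33 / 40 * η ^ (1 - 1 / (Nat.card H.edgeSet : ℝ)) * s - Fintype.card α →
      ContainsCopy (blowupGraph H t) G := by
  classical
  obtain ⟨x, y, hxy⟩ := hH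
  have hF : H.edgeFinset.Nonempty := ⟨s(x, y), by simpa using hxy⟩
  obtain ⟨ε, hmε, M, hM, hselect⟩ :=
    exists_uniform_parts_mul_prod_card_le_card_transversalCopies H.edgeFinset hF hη
  refine ⟨M, fun {β} _ G s t hβ hcopies hs hsmall ht ↦ ?_⟩
  simp only [← forall_mem_edgeFinset_map_mem_edgeSet (H := H)] at hcopies
  obtain ⟨V, hdisj, hU, hVcard, hcount⟩ := hselect G hβ hcopies
  rw [Nat.card_eq_fintype_card, ← H.edgeFinset_card, one_div] at ht
  set r : ℝ := 1 - (#H.edgeFinset : ℝ)⁻¹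
  have : 0 ≤ r := sub_nonneg.2 (Nat.cast_inv_le_one _)
  have hr' : r ≤ 1 := sub_le_self 1 (by positivity)
  have hq_rpow : 99 / 100 * η ^ r ≤ (99 / 100 * η) ^ r := by
    rw [Real.mul_rpow (by norm_num) hη.le]
    gcongr
    exact Real.self_le_rpow_of_le_one (by norm_num) (by norm_num) hr'
  refine containsCopy_blowupGraph_of_isUniform hF hdisj hU (by positivity) hcount
    (κ := η * Real.exp (-2)) (by positivity) ?_ hs (fun a ↦ ?_) (ht.trans ?_)
  · linarith [mul_le_mul_of_nonneg_left exp_neg_two_le hη.le]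
  · have : (η * Real.exp (-2)) ^ s * Fintype.card β ≤
        (η * Real.exp (-2)) ^ s * (2 * M * #(V a)) :=
      mul_le_mul_of_nonneg_left (by exact_mod_cast hVcard a) (by positivity)
    have hM' : (0 : ℝ) < 2 * M := by positivity
    exact lt_of_mul_lt_mul_left (by linarith) hM'.le
  · have := mul_le_mul_of_nonneg_right hq_rpow (Nat.cast_nonneg (α := ℝ) s)
    linarith

end Threshold

section Asymptotics

open Filter

theorem eventually_mul_sq_lt_exp_div_four (C : ℝ) :
    ∀ᶠ y in atTop, C * y ^ 2 < Real.exp (y / 4) := by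
  have h : Tendsto (fun y : ℝ ↦ Real.exp (y / 4) / (y / 4) ^ 2) atTop atTop :=
    (Real.tendsto_exp_div_pow_atTop 2).comp (tendsto_id.atTop_div_const four_pos)
  filter_upwards [h.eventually_gt_atTop (16 * C), eventually_gt_atTop 0] with y hy hy0
  rw [lt_div_iff₀ (by positivity)] at hy
  linarith

theorem eventually_exists_pow_mul_exp_gt {L c : ℝ} (hL : 1 ≤ L) (hc : 0 < c) (C k : ℝ)
    (hC : 0 ≤ C) :
    ∀ᶠ y in atTop, ∃ s : ℕ, s ≠ 0 ∧ C * (s : ℝ) ^ 2 < Real.exp (-(L + 2)) ^ s * Real.exp y ∧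
      c / (5 * L) * y ≤ 33 / 40 * c * s - k := by
  have : 0 < L := by linarith
  filter_upwards [eventually_mul_sq_lt_exp_div_four C, eventually_ge_atTop (4 * L),
    eventually_ge_atTop (160 * L * (33 / 40 + k / c))] with y hexp hyL hyk
  have hy : 0 < y := by linarith
  have hs_le : (⌊y / (4 * L)⌋₊ : ℝ) ≤ y / (4 * L) := Nat.floor_le (by positivity)
  have hs_ge : y / (4 * L) - 1 ≤ ⌊y / (4 * L)⌋₊ := (Nat.sub_one_lt_floor _).le
  refine ⟨⌊y / (4 * L)⌋₊, (Nat.floor_pos.2 ((one_le_div (by positivity)).2 hyL)).ne', ?_, ?_⟩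
  all_goals generalize (⌊y / (4 * L)⌋₊) = s at hs_le hs_ge ⊢
  · rw [le_div_iff₀ (by positivity)] at hs_le
    have hsy : (s : ℝ) ≤ y := by nlinarith [s.cast_nonneg (α := ℝ)]
    have hexponent : y / 4 ≤ s * -(L + 2) + y := by nlinarith [s.cast_nonneg (α := ℝ)]
    calc C * (s : ℝ) ^ 2 ≤ C * y ^ 2 := by gcongr
      _ < Real.exp (y / 4) := hexp
      _ ≤ Real.exp (s * -(L + 2) + y) := Real.exp_le_exp.2 hexponent
      _ = Real.exp (-(L + 2)) ^ s * Real.exp y := by rw [Real.exp_add, Real.exp_nat_mul]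
  · have hyk' : 33 / 40 * c + k ≤ c * y / (160 * L) := by
      rw [le_div_iff₀ (by positivity)]
      calc (33 / 40 * c + k) * (160 * L) = c * (160 * L * (33 / 40 + k / c)) := by
            field_simp
        _ ≤ c * y := by gcongr
    calc c / (5 * L) * y = 33 / 40 * c * (y / (4 * L) - 1) - k -
          (c * y / (160 * L) - (33 / 40 * c + k)) := by field_simp; ring
      _ ≤ 33 / 40 * c * (y / (4 * L) - 1) - k := by linarith
      _ ≤ 33 / 40 * c * s - k := by gcongr

theorem eventually_exists_pow_mul_natCast_gt {η c : ℝ} (hη0 : 0 < η) (hη1 : η < Real.exp (-1))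
    (hc : 0 < c) (C k : ℝ) (hC : 0 ≤ C) :
    ∀ᶠ n : ℕ in atTop, ∃ s : ℕ, s ≠ 0 ∧ C * (s : ℝ) ^ 2 < (η * Real.exp (-2)) ^ s * n ∧
      c / (5 * Real.log (1 / η)) * Real.log n ≤ 33 / 40 * c * s - k := by
  have hL : 1 ≤ Real.log (1 / η) := by
    rw [one_div, Real.log_inv]
    linarith [(Real.log_lt_iff_lt_exp hη0).2 hη1]
  have hη_exp : Real.exp (-(Real.log (1 / η) + 2)) = η * Real.exp (-2) := by
    rw [one_div, Real.log_inv, neg_add, neg_neg, Real.exp_add, Real.exp_log hη0]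
  have hlog := Real.tendsto_log_atTop.comp (tendsto_natCast_atTop_atTop (R := ℝ))
  filter_upwards [hlog.eventually (eventually_exists_pow_mul_exp_gt hL hc C k hC),
    eventually_gt_atTop 0] with n hn hn0
  simpa only [Function.comp_apply, Real.exp_log (Nat.cast_pos.2 hn0), hη_exp] using hn

end Asymptotics

/-- improved version of Nikiforov's theorem. If `0 < η < e⁻¹` and `H` is a
graph on `k` vertices with at least one edge, then with `λ = η^(1-1/|E(H)|) / (5 log(1/η))`,
for all sufficiently large `n`, every graph `G` on `n` vertices with at least `η n^k` labeled
copies of `H` contains the blowup `H[t]` with `t = ⌊λ log n⌋`. -/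
theorem nikiforov_improved (η : ℝ) (hη0 : 0 < η) (hη1 : η < Real.exp (-1))
    (α : Type) [Fintype α] (H : SimpleGraph α) (hH : ∃ x y, H.Adj x y) :
    ∃ N : ℕ, ∀ n : ℕ, N ≤ n → ∀ G : SimpleGraph (Fin n),
      η * (n : ℝ) ^ (Fintype.card α) ≤
        (Nat.card {f : α → Fin n // Function.Injective f ∧
          ∀ x y, H.Adj x y → G.Adj (f x) (f y)} : ℝ) →
      ContainsCopy
        (blowupGraph H ⌊(η ^ ((1 : ℝ) - 1 / (Nat.card H.edgeSet : ℝ)) /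
          (5 * Real.log (1 / η))) * Real.log n⌋₊) G := by
  obtain ⟨M, hblowup⟩ := exists_forall_containsCopy_blowupGraph hH hη0
  obtain ⟨N, hN⟩ := Filter.eventually_atTop.1 <| (Filter.eventually_ge_atTop M).and <|
    eventually_exists_pow_mul_natCast_gt hη0 hη1 (c := η ^ (1 - 1 / (Nat.card H.edgeSet : ℝ)))
      (by positivity) (4 * M) (Fintype.card α) (by positivity)
  refine ⟨N, fun n hn G hcopies ↦ ?_⟩
  obtain ⟨hMn, s, hs, hsmall, hlarge⟩ := hN n hn
  have hlog : 0 ≤ Real.log (1 / η) := Real.log_nonneg <| by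
    rw [one_le_div hη0]
    exact hη1.le.trans (Real.exp_le_one_iff.2 (by norm_num))
  exact hblowup G s _ (by simpa) (by simpa) hs (by simpa) <|
    (Nat.floor_le (mul_nonneg (by positivity) (Real.log_natCast_nonneg n))).trans hlarge
end

section
/- Let H be a graph with vertex set [k] = {1,…,k} such that {1,2} is an edge of H. For every edge ij of H let p_{ij} ∈ (0,1] be given, with p_{12} ≤ 1/2, and let 0 < α < ∏_{ij ∈ E(H)} p_{ij}. Then there exists n_0 such that the following holds for all n ≥ n_0. Suppose Γ is a k-partite graph with parts W_1, …, W_k, each of size at least n, such that whenever ij is an edge of H, the pair (W_i, W_j) is (α²/(8k²))-regular with edge density d(W_i, W_j) ≥ p_{ij}. Then Γ contains a canonical copy of H[t] (i.e., a copy of H[t] in which the blowup class of vertex i lies inside W_i for every i), where t = ⌊( ∏_{ij ∈ E(H), ij ≠ {1,2}} p_{ij} − α ) · log n / log(1/p_{12}) ⌋. -/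
/-!
Embed the vertices of `H` one after another and call a partial embedding typical if every remaining
vertex still has, up to an error of `ε` per embedded vertex, its expected share of candidates. By
regularity all but a few candidates extend a typical embedding to a typical one.

Now run this for `s` embeddings simultaneously. For the edge `uv`, double counting and Jensen's
inequality give `s ≈ log n / log (1 / p s(u, v))` embeddings whose images of `u` and of `v` span a
complete bipartite graph. At a further vertex `m`, each embedding has a proportion
`r ≈ ∏ i, p s(i, m)` of `W m` at its disposal, so a positive proportion of `W m` is available to
about `r * s` embeddings at once; there are only `2 ^ s` sets of embeddings, so some set of that
size has at least `s` common choices. Hence `m` costs only a factor `r`, and all vertices together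
cost the product of `p e` over the edges `e ≠ s(u, v)`. Candidates are counted for each embedding
separately, which is why `ε` need not depend on `s`.
-/

open Finset Filter

section Counting

variable {α β : Type*}

lemma sum_card_common_eq_sum_choose (A : Finset α) (B : Finset β) (R : α → β → Prop)
    [∀ a b, Decidable (R a b)] (s : ℕ) :
    ∑ S ∈ A.powersetCard s, #{b ∈ B | ∀ a ∈ S, R a b} =
      ∑ b ∈ B, (#{a ∈ A | R a b}).choose s := by
  refine (sum_card_bipartiteAbove_eq_sum_card_bipartiteBelow fun S b => ∀ a ∈ S, R a b).trans ?_
  refine sum_congr rfl fun b _ => ?_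
  rw [← card_powersetCard]
  congr 1
  ext S
  simp only [mem_bipartiteBelow, mem_powersetCard, subset_iff, mem_filter]
  grind

lemma pow_mul_card_le_sum_descFactorial (B : Finset β) (d : β → ℕ) {x : ℝ} (hx : 0 ≤ x) {s : ℕ}
    (hd : (x + s) * #B ≤ ∑ b ∈ B, (d b : ℝ)) :
    x ^ s * #B ≤ ∑ b ∈ B, ((d b).descFactorial s : ℝ) := by
  obtain rfl | hB := B.eq_empty_or_nonempty
  · simp
  have hB0 : (0 : ℝ) < #B := mod_cast hB.card_pos
  have hmean : x ≤ ∑ b ∈ B, (#B : ℝ)⁻¹ * ((d b + 1 - s : ℕ) : ℝ) := by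
    rw [← mul_sum, ← div_eq_inv_mul, le_div_iff₀ hB0]
    calc x * #B ≤ ∑ b ∈ B, ((d b : ℝ) - s) := by
          rw [sum_sub_distrib, sum_const, nsmul_eq_mul]; linarith
      _ ≤ _ := sum_le_sum fun b _ => by
          rw [sub_le_iff_le_add]
          exact mod_cast (by lia : d b ≤ d b + 1 - s + s)
  have hJensen : x ^ s ≤ ∑ b ∈ B, (#B : ℝ)⁻¹ * ((d b + 1 - s : ℕ) : ℝ) ^ s :=
    (pow_le_pow_left₀ hx hmean s).trans <| Real.pow_arith_mean_le_arith_mean_pow B _ _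
      (fun _ _ => by positivity) (by simp [hB0.ne']) (fun _ _ => by positivity) s
  rw [← mul_sum, ← div_eq_inv_mul, le_div_iff₀ hB0] at hJensen
  exact hJensen.trans <| sum_le_sum fun b _ => mod_cast Nat.pow_sub_le_descFactorial _ _

lemma exists_subset_card_eq_and_card_common_ge (A : Finset α) (B : Finset β) (R : α → β → Prop)
    [∀ a b, Decidable (R a b)] {c : ℝ} (hc : 0 ≤ c) {s : ℕ} (hs : s ≤ #A)
    (hdeg : (c * #A + s) * #B ≤ ∑ b ∈ B, (#{a ∈ A | R a b} : ℝ)) :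
    ∃ S ⊆ A, #S = s ∧ ∃ C ⊆ B, c ^ s * #B ≤ #C ∧ ∀ a ∈ S, ∀ b ∈ C, R a b := by
  suffices ∃ S ∈ A.powersetCard s, c ^ s * #B ≤ #{b ∈ B | ∀ a ∈ S, R a b} by
    obtain ⟨S, hS, hcard⟩ := this
    obtain ⟨hSA, hSs⟩ := mem_powersetCard.1 hS
    exact ⟨S, hSA, hSs, _, filter_subset _ _, hcard, fun a ha b hb => (mem_filter.1 hb).2 a ha⟩
  refine exists_le_of_sum_le (powersetCard_nonempty.2 hs) ?_
  have hfact : (0 : ℝ) < s.factorial := by positivity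
  refine le_of_mul_le_mul_left ?_ hfact
  rw [sum_const, card_powersetCard, nsmul_eq_mul]
  calc (s.factorial : ℝ) * ((#A).choose s * (c ^ s * #B))
      = ((#A).descFactorial s : ℝ) * (c ^ s * #B) := by
        rw [Nat.descFactorial_eq_factorial_mul_choose]; push_cast; ring
    _ ≤ (#A : ℝ) ^ s * (c ^ s * #B) := by
        gcongr; exact mod_cast Nat.descFactorial_le_pow _ _
    _ = (c * #A) ^ s * #B := by ring
    _ ≤ ∑ b ∈ B, ((#{a ∈ A | R a b}).descFactorial s : ℝ) :=
        pow_mul_card_le_sum_descFactorial B _ (by positivity) hdeg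
    _ = s.factorial * ∑ S ∈ A.powersetCard s, (#{b ∈ B | ∀ a ∈ S, R a b} : ℝ) := by
        simp_rw [Nat.descFactorial_eq_factorial_mul_choose]
        exact mod_cast by rw [sum_card_common_eq_sum_choose, mul_sum]

lemma mul_card_le_card_filter_of_le_card (I : Finset α) (A : Finset β) (R : α → β → Prop)
    [∀ a b, Decidable (R a b)] {r δ : ℝ} (hδ : δ ≤ r) (hI : I.Nonempty)
    (hR : ∀ a ∈ I, r * #A ≤ #{v ∈ A | R a v}) :
    δ * #A ≤ #{v ∈ A | (r - δ) * #I ≤ #{a ∈ I | R a v}} := by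
  have hI0 : (0 : ℝ) < #I := mod_cast hI.card_pos
  have hbound : ∀ v ∈ A, (#{a ∈ I | R a v} : ℝ) ≤
      (r - δ) * #I + if (r - δ) * #I ≤ #{a ∈ I | R a v} then (#I : ℝ) else 0 := by
    intro v _
    have hnonneg : 0 ≤ (r - δ) * #I := mul_nonneg (sub_nonneg.2 hδ) hI0.le
    have hle : (#{a ∈ I | R a v} : ℝ) ≤ #I := mod_cast card_filter_le _ _
    split_ifs <;> linarith
  have hcount : #I * (r * #A) ≤ #A * ((r - δ) * #I) +
      #{v ∈ A | (r - δ) * #I ≤ #{a ∈ I | R a v}} * #I := by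
    calc #I * (r * #A) ≤ ∑ a ∈ I, (#{v ∈ A | R a v} : ℝ) := by
          rw [← nsmul_eq_mul, ← sum_const]; exact sum_le_sum hR
      _ = ∑ v ∈ A, (#{a ∈ I | R a v} : ℝ) :=
          mod_cast sum_card_bipartiteAbove_eq_sum_card_bipartiteBelow R
      _ ≤ _ := sum_le_sum hbound
      _ = _ := by
          rw [sum_add_distrib, sum_const, ← sum_filter, sum_const, nsmul_eq_mul, nsmul_eq_mul]
  nlinarith

lemma exists_subset_card_ge_and_card_common_ge (I : Finset α) (A : Finset β) (R : α → β → Prop)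
    [∀ a b, Decidable (R a b)] {r δ : ℝ} (hδ : δ ≤ r)
    (hR : ∀ a ∈ I, r * #A ≤ #{v ∈ A | R a v}) (hA : (2 : ℝ) ^ #I * #I ≤ δ * #A) :
    ∃ I' ⊆ I, (r - δ) * #I ≤ #I' ∧ ∃ C ⊆ A, #I ≤ #C ∧ ∀ a ∈ I', ∀ v ∈ C, R a v := by
  classical
  obtain rfl | hI := I.eq_empty_or_nonempty
  · exact ⟨∅, by simp, by simp, ∅, by simp⟩
  set G := {v ∈ A | (r - δ) * #I ≤ #{a ∈ I | R a v}}
  have hG : #I.powerset * #I ≤ #G := by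
    rw [card_powerset]
    exact mod_cast hA.trans (mul_card_le_card_filter_of_le_card I A R hδ hI hR)
  obtain ⟨I', hI', hfiber⟩ := exists_le_card_fiber_of_mul_le_card_of_maps_to
    (f := fun v => {a ∈ I | R a v}) (fun v _ => mem_powerset.2 (filter_subset _ I))
    (powerset_nonempty I) hG
  obtain ⟨v, hv⟩ := card_pos.1 (hI.card_pos.trans_le hfiber)
  obtain ⟨hvG, rfl⟩ := mem_filter.1 hv
  refine ⟨_, mem_powerset.1 hI', (mem_filter.1 hvG).2, _,
    (filter_subset _ G).trans (filter_subset _ A), hfiber, fun a ha w hw => ?_⟩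
  rw [← (mem_filter.1 hw).2] at ha
  exact (mem_filter.1 ha).2

end Counting

section Numerics

lemma mul_sub_add_le_sub_mul_sub {a b x y : ℝ} (ha : a ≤ 1) (hb : b ≤ 1) (hx : 0 ≤ x)
    (hy : 0 ≤ y) : a * b - (x + y) ≤ (a - x) * (b - y) := by
  nlinarith [mul_nonneg hx hy, mul_nonneg hx (sub_nonneg.2 hb), mul_nonneg hy (sub_nonneg.2 ha)]

lemma log_one_div_sub_le {p α e : ℝ} (hα : 0 < α) (hαp : α < p) (hp : p ≤ 1 / 2)
    (he : e ≤ α ^ 2 / 4) : Real.log (1 / (p - e)) ≤ (1 + α / 2) * Real.log (1 / p) := by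
  have hp0 : 0 < p := hα.trans hαp
  have hfactor : 0 < 1 - α / 4 := by linarith
  have hlog2 : 2 / 3 ≤ Real.log (1 / p) := by
    have : Real.log 2 ≤ Real.log (1 / p) :=
      Real.log_le_log (by norm_num) ((le_div_iff₀ hp0).2 (by linarith))
    linarith [Real.log_two_gt_d9]
  have hloss : (1 - α / 4)⁻¹ - 1 ≤ α / 3 := by
    rw [sub_le_iff_le_add, inv_le_iff_one_le_mul₀ hfactor]
    nlinarith
  calc Real.log (1 / (p - e)) ≤ Real.log (1 / p * (1 - α / 4)⁻¹) := by
        have hle : p * (1 - α / 4) ≤ p - e := by nlinarith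
        have hpos : 0 < p * (1 - α / 4) := mul_pos hp0 hfactor
        rw [one_div, one_div, ← mul_inv]
        exact Real.log_le_log (inv_pos.2 (hpos.trans_le hle)) (inv_anti₀ hpos hle)
    _ = Real.log (1 / p) + Real.log (1 - α / 4)⁻¹ :=
        Real.log_mul (by positivity) (by positivity)
    _ ≤ Real.log (1 / p) + α / 3 := by
        linarith [Real.log_le_sub_one_of_pos (inv_pos.2 hfactor)]
    _ ≤ _ := by nlinarith

open Real in
lemma eventually_ceil_mul_log_le {c θ η : ℝ} (hc : 0 < c) (hc1 : c ≤ 1) (hθ : 0 ≤ θ)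
    (hθc : θ * log (1 / c) < 1) (hη : 0 < η) :
    ∀ᶠ n : ℕ in atTop, (⌈θ * log n⌉₊ : ℝ) ≤ η * c ^ ⌈θ * log n⌉₊ * n := by
  set γ := 1 - θ * log (1 / c) with hγ
  have hγ0 : 0 < γ := sub_pos.2 hθc
  have hlittle : (fun x : ℝ => θ * log x + 1) =o[atTop] fun x => x ^ γ :=
    ((isLittleO_log_rpow_atTop hγ0).const_mul_left θ).add <|
      Asymptotics.isLittleO_const_left.2 <| .inr <|
        tendsto_norm_atTop_atTop.comp (tendsto_rpow_atTop hγ0)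
  filter_upwards [tendsto_natCast_atTop_atTop.eventually (hlittle.def (mul_pos hη hc)),
    eventually_gt_atTop 0] with n hn hn0
  have hn0' : (0 : ℝ) < n := mod_cast hn0
  have hceil := Nat.ceil_lt_add_one (mul_nonneg hθ (log_natCast_nonneg n))
  have hpow : c * (n : ℝ) ^ γ ≤ c ^ ⌈θ * log n⌉₊ * n := by
    calc c * (n : ℝ) ^ γ = c ^ (θ * log n + 1) * n := by
          rw [rpow_add hc, rpow_one, rpow_def_of_pos hn0', rpow_def_of_pos hc, hγ, one_div,
            log_inv, mul_sub, mul_one, exp_sub, exp_log hn0', mul_neg, mul_neg, exp_neg]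
          field_simp
      _ ≤ c ^ (⌈θ * log n⌉₊ : ℝ) * n := by
          gcongr ?_ * _
          exact rpow_le_rpow_of_exponent_ge hc hc1 hceil.le
      _ = _ := by rw [rpow_natCast]
  calc (⌈θ * log n⌉₊ : ℝ) ≤ θ * log n + 1 := hceil.le
    _ ≤ η * c * (n : ℝ) ^ γ := by
        refine (le_abs_self _).trans ?_
        rwa [norm_eq_abs, norm_of_nonneg (by positivity)] at hn
    _ ≤ η * c ^ ⌈θ * log n⌉₊ * n := by
        rw [mul_assoc, mul_assoc]; gcongr

lemma eventually_exists_le_mul_pow_mul {c Q ρ η : ℝ} (hc : 0 < c) (hc1 : c ≤ 1) (hQ : 0 < Q)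
    (hρ : 0 ≤ ρ) (hρc : ρ * Real.log (1 / c) < Q) (hη : 0 < η) :
    ∀ᶠ n : ℕ in atTop, ∃ s : ℕ, s ≤ η * c ^ s * n ∧ ρ * Real.log n ≤ Q * s := by
  have hθ : ρ / Q * Real.log (1 / c) < 1 := by rwa [div_mul_eq_mul_div, div_lt_one hQ]
  filter_upwards [eventually_ceil_mul_log_le hc hc1 (by positivity) hθ hη] with n hn
  refine ⟨_, hn, ?_⟩
  calc ρ * Real.log n = Q * (ρ / Q * Real.log n) := by field_simp
    _ ≤ _ := by gcongr; exact Nat.le_ceil _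

lemma sub_div_log_mul_log_lt {p q α e d : ℝ} (hα : 0 < α) (hαp : α < p) (hp : p ≤ 1 / 2)
    (hαq : α < q) (hq : q ≤ 1) (he : e ≤ α ^ 2 / 4) (hd : d ≤ 3 * α ^ 2 / 16) :
    (q - α) / Real.log (1 / p) * Real.log (1 / (p - e)) < q - d := by
  have hp0 : 0 < p := hα.trans hαp
  have hL : 0 < Real.log (1 / p) := Real.log_pos ((lt_div_iff₀ hp0).2 (by linarith))
  calc (q - α) / Real.log (1 / p) * Real.log (1 / (p - e))
      ≤ (q - α) / Real.log (1 / p) * ((1 + α / 2) * Real.log (1 / p)) := by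
        have : 0 ≤ q - α := by linarith
        gcongr
        exact log_one_div_sub_le hα hαp hp he
    _ = (q - α) * (1 + α / 2) := by field_simp
    _ < q - d := by nlinarith

lemma eventually_exists_blowup_size {p q α e d η : ℝ} (hα : 0 < α) (hαp : α < p)
    (hp : p ≤ 1 / 2) (hαq : α < q) (hq : q ≤ 1) (he0 : 0 ≤ e) (he : e ≤ α ^ 2 / 4)
    (hd : d ≤ 3 * α ^ 2 / 16) (hη : 0 < η) :
    ∀ᶠ n : ℕ in atTop, ∃ s : ℕ, s ≤ η * (p - e) ^ s * n ∧
      (q - α) * Real.log n / Real.log (1 / p) ≤ (q - d) * s := by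
  have hlog : 0 ≤ Real.log (1 / p) :=
    Real.log_nonneg ((le_div_iff₀ (hα.trans hαp)).2 (by linarith))
  have hrate : 0 ≤ (q - α) / Real.log (1 / p) := div_nonneg (by linarith) hlog
  filter_upwards [eventually_exists_le_mul_pow_mul (by nlinarith) (by linarith) (by nlinarith)
    hrate (sub_div_log_mul_log_lt hα hαp hp hαq hq he hd) hη] with n ⟨s, hs, hsize⟩
  exact ⟨s, hs, by rwa [mul_div_right_comm]⟩

lemma two_mul_add_one_mul_tolerance_le {α : ℝ} {k : ℕ} (hk : 2 ≤ k) :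
    (2 * k + 1) * (α ^ 2 / (8 * k ^ 2)) ≤ α ^ 2 / 4 := by
  have hk' : (2 : ℝ) ≤ k := mod_cast hk
  rw [mul_div_assoc', div_le_div_iff₀ (by positivity) (by norm_num)]
  nlinarith [mul_nonneg (sq_nonneg α) (by nlinarith : (0 : ℝ) ≤ 8 * k ^ 2 - 4 * (2 * k + 1))]

lemma mul_succ_mul_tolerance_le {α : ℝ} {k : ℕ} (hk : 2 ≤ k) :
    k * ((k + 1) * (α ^ 2 / (8 * k ^ 2))) ≤ 3 * α ^ 2 / 16 := by
  have hk' : (2 : ℝ) ≤ k := mod_cast hk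
  rw [← mul_assoc, mul_div_assoc', div_le_div_iff₀ (by positivity) (by norm_num)]
  nlinarith [mul_nonneg (sq_nonneg α) (by nlinarith : (0 : ℝ) ≤ 24 * k ^ 2 - 16 * k * (k + 1))]

end Numerics

section RegularTuple

variable {ι V : Type*}

/-- A tuple `W` of vertex sets of `Γ` in which every pair indexed by an edge `ij` of `H` is
`ε`-regular of density at least `p s(i, j)`. The sets need not be disjoint. -/
structure IsRegularTuple (H : SimpleGraph ι) (Γ : SimpleGraph V) [DecidableRel Γ.Adj]
    (W : ι → Finset V) (p : Sym2 ι → ℝ) (ε : ℝ) : Prop where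
  isUniform : ∀ i j, H.Adj i j → Γ.IsUniform ε (W i) (W j)
  le_edgeDensity : ∀ i j, H.Adj i j → p s(i, j) ≤ (Γ.edgeDensity (W i) (W j) : ℝ)

lemma card_lowDegree_le {Γ : SimpleGraph V} [DecidableRel Γ.Adj] {A B C : Finset V} {ε q : ℝ}
    (hunif : Γ.IsUniform ε A B) (hq : q ≤ (Γ.edgeDensity A B : ℝ)) (hCB : C ⊆ B)
    (hC : ε * #B ≤ #C) :
    (#{v ∈ A | (#{u ∈ C | Γ.Adj v u} : ℝ) < (q - ε) * #C} : ℝ) ≤ ε * #A := by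
  set D := {v ∈ A | (#{u ∈ C | Γ.Adj v u} : ℝ) < (q - ε) * #C}
  by_contra! hD
  have hD0 : (0 : ℝ) < #D := (mul_nonneg hunif.pos.le (Nat.cast_nonneg _)).trans_lt hD
  have hinter : (#(Γ.interedges D C) : ℝ) ≤ #D * ((q - ε) * #C) := by
    calc (#(Γ.interedges D C) : ℝ) = ∑ v ∈ D, (#{u ∈ C | Γ.Adj v u} : ℝ) := by
          rw [SimpleGraph.interedges, Rel.interedges, card_filter, sum_product]
          push_cast [card_filter]
          rfl
      _ ≤ ∑ _v ∈ D, (q - ε) * #C := sum_le_sum fun v hv => (mem_filter.1 hv).2.le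
      _ = _ := by rw [sum_const, nsmul_eq_mul]
  have hC0 : (0 : ℝ) < #C := by
    obtain ⟨v, hv⟩ := card_pos.1 (Nat.cast_pos.1 hD0)
    refine Nat.cast_pos.2 (card_pos.2 (nonempty_iff_ne_empty.2 ?_))
    rintro rfl
    simpa using (mem_filter.1 hv).2
  have hdens : (Γ.edgeDensity D C : ℝ) ≤ q - ε := by
    rw [SimpleGraph.edgeDensity_def]
    push_cast
    rw [div_le_iff₀ (by positivity)]
    linarith
  have hclose := hunif (filter_subset _ A) hCB (by linarith) (by linarith)
  linarith [(abs_lt.1 hclose).1]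

variable (H : SimpleGraph ι) [DecidableRel H.Adj] (Γ : SimpleGraph V) [DecidableRel Γ.Adj]
  (W : ι → Finset V) (p : Sym2 ι → ℝ) (ε : ℝ)

/-- The density expected between the parts `i` and `j`; it is `1` on the non-edges of `H`, which
impose no condition, so that products over all pairs are products over the edges. -/
def edgeWeight (i j : ι) : ℝ := if H.Adj i j then p s(i, j) else 1

/-- The expected proportion of `W l` that is joined to given images of the vertices in `S` as `H`
prescribes. -/
def linkWeight (S : Finset ι) (l : ι) : ℝ := ∏ i ∈ S, edgeWeight H p i l

/-- The possible images in `W l` of the vertex `l`, once each `i ∈ S` has been mapped to `x i`. -/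
def candidates (S : Finset ι) (x : ι → V) (l : ι) : Finset V :=
  {v ∈ W l | ∀ i ∈ S, H.Adj i l → Γ.Adj (x i) v}

/-- A partial embedding `x`, defined on `S`, that leaves every other vertex at least as many
candidates as expected, up to an error `ε` for each vertex of `S`. The values of `x` outside `S`
are irrelevant. -/
def IsTypical (S : Finset ι) (x : ι → V) : Prop :=
  ∀ l ∉ S, (linkWeight H p S l - #S * ε) * #(W l) ≤ #(candidates H Γ W S x l)

/-- A canonical blowup of `H[S]`, whose class at `i ∈ S` consists of the distinct vertices `X a i`
for `a ∈ I`, such that each of the embeddings `X a` is typical. -/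
structure IsTypicalBlowup {κ : Type*} (S : Finset ι) (I : Finset κ) (X : κ → ι → V) : Prop where
  injOn : ∀ i ∈ S, Set.InjOn (X · i) I
  mem : ∀ i ∈ S, ∀ a ∈ I, X a i ∈ W i
  adj : ∀ i ∈ S, ∀ j ∈ S, H.Adj i j → ∀ a ∈ I, ∀ b ∈ I, Γ.Adj (X a i) (X b j)
  typical : ∀ a ∈ I, IsTypical H Γ W p ε S (X a)

open Classical in
/-- The images of `m` that extend a partial embedding `x` of `S` to a typical one of
`insert m S`. -/
noncomputable def typicalExtensions [DecidableEq ι] (S : Finset ι) (x : ι → V) (m : ι) : Finset V :=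
  {w ∈ candidates H Γ W S x m | IsTypical H Γ W p ε (insert m S) (Function.update x m w)}

variable {H Γ W p ε} {S : Finset ι} {x : ι → V} {l m u v : ι}

lemma candidates_subset : candidates H Γ W S x l ⊆ W l := filter_subset _ _

lemma mem_typicalExtensions [DecidableEq ι] {w : V} :
    w ∈ typicalExtensions H Γ W p ε S x m ↔ w ∈ candidates H Γ W S x m ∧
      IsTypical H Γ W p ε (insert m S) (Function.update x m w) := by
  classical exact mem_filter

lemma typicalExtensions_subset [DecidableEq ι] : typicalExtensions H Γ W p ε S x m ⊆ W m :=
  fun _ hw => candidates_subset (mem_typicalExtensions.1 hw).1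

lemma isTypical_empty : IsTypical H Γ W p ε ∅ x := by
  simp [IsTypical, linkWeight, candidates]

lemma candidates_insert_update [DecidableEq ι] (hm : m ∉ S) (w : V) :
    candidates H Γ W (insert m S) (Function.update x m w) l =
      {b ∈ candidates H Γ W S x l | H.Adj m l → Γ.Adj w b} := by
  have hne : ∀ i ∈ S, i ≠ m := fun i hi => ne_of_mem_of_not_mem hi hm
  ext b
  simp only [candidates, mem_filter, forall_mem_insert, Function.update_self]
  grind [Function.update_of_ne]

lemma linkWeight_insert [DecidableEq ι] (hm : m ∉ S) :
    linkWeight H p (insert m S) l = edgeWeight H p m l * linkWeight H p S l :=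
  prod_insert hm

lemma card_atypical_le (hreg : IsRegularTuple H Γ W p ε) (hε : 0 ≤ ε)
    (hlarge : ε ≤ linkWeight H p S l - #S * ε) (hx : IsTypical H Γ W p ε S x) (hl : l ∉ S) :
    (#{w ∈ W m | (#{b ∈ candidates H Γ W S x l | H.Adj m l → Γ.Adj w b} : ℝ) <
      (edgeWeight H p m l - ε) * #(candidates H Γ W S x l)} : ℝ) ≤ ε * #(W m) := by
  by_cases hadj : H.Adj m l
  · simp only [edgeWeight, hadj, if_true, forall_const]
    refine card_lowDegree_le (hreg.isUniform m l hadj) (hreg.le_edgeDensity m l hadj)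
      (filter_subset _ _) ((mul_le_mul_of_nonneg_right hlarge ?_).trans (hx l hl))
    positivity
  · simp only [edgeWeight, hadj, if_false, false_imp_iff, filter_true]
    rw [filter_false_of_mem]
    · simpa using by positivity
    · intro w _
      have : (0 : ℝ) ≤ ε * #(candidates H Γ W S x l) := by positivity
      linarith

section Weights

variable [Fintype H.edgeSet]

lemma edgeWeight_mem_Icc (hp : ∀ e ∈ H.edgeFinset, p e ∈ Set.Icc 0 1) (i j : ι) :
    edgeWeight H p i j ∈ Set.Icc 0 1 := by
  rw [edgeWeight]
  split_ifs with hij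
  · exact hp _ (by simpa using hij)
  · simp

lemma linkWeight_le_one (hp : ∀ e ∈ H.edgeFinset, p e ∈ Set.Icc 0 1) (S : Finset ι) (l : ι) :
    linkWeight H p S l ≤ 1 :=
  prod_le_one (fun i _ => (edgeWeight_mem_Icc hp i l).1) fun i _ => (edgeWeight_mem_Icc hp i l).2

lemma prod_edgeFinset_le_linkWeight (hp : ∀ e ∈ H.edgeFinset, p e ∈ Set.Icc 0 1)
    (S : Finset ι) (l : ι) : ∏ e ∈ H.edgeFinset, p e ≤ linkWeight H p S l := by
  classical
  have hlink : linkWeight H p S l = ∏ e ∈ {i ∈ S | H.Adj i l}.image (s(·, l)), p e := by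
    rw [prod_image fun i _ j _ hij => Sym2.congr_left.1 hij, prod_filter]
    rfl
  rw [hlink]
  refine prod_le_prod_of_subset_of_le_one ?_ (fun e he => (hp e he).1) fun e he _ => (hp e he).2
  simp [image_subset_iff]

lemma prod_edgeFinset_le_edgeWeight (hp : ∀ e ∈ H.edgeFinset, p e ∈ Set.Icc 0 1) (i j : ι) :
    ∏ e ∈ H.edgeFinset, p e ≤ edgeWeight H p i j := by
  simpa [linkWeight] using prod_edgeFinset_le_linkWeight hp {i} j

lemma prod_erase_edge_inter_sym2_insert [DecidableEq ι] (hmS : m ∉ S) (hmu : m ≠ u) (hmv : m ≠ v) :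
    ∏ e ∈ H.edgeFinset.erase s(u, v) ∩ (insert m S).sym2, p e =
      linkWeight H p S m * ∏ e ∈ H.edgeFinset.erase s(u, v) ∩ S.sym2, p e := by
  have hsplit : H.edgeFinset.erase s(u, v) ∩ (insert m S).sym2 =
      {i ∈ S | H.Adj i m}.image (s(·, m)) ∪ H.edgeFinset.erase s(u, v) ∩ S.sym2 := by
    ext e
    induction e with | _ a b
    simp only [mem_inter, mem_erase, mem_union, mem_image, mem_filter, mk_mem_sym2_iff,
      mem_insert, SimpleGraph.mem_edgeFinset, SimpleGraph.mem_edgeSet, Sym2.eq_iff]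
    grind [SimpleGraph.adj_comm, SimpleGraph.irrefl]
  have hdisj : Disjoint ({i ∈ S | H.Adj i m}.image (s(·, m)))
      (H.edgeFinset.erase s(u, v) ∩ S.sym2) := by
    simp only [disjoint_left, mem_image, mem_inter]
    rintro _ ⟨i, -, rfl⟩ ⟨-, h⟩
    exact hmS (mk_mem_sym2_iff.1 h).2
  rw [hsplit, prod_union hdisj, prod_image fun i _ j _ hij => Sym2.congr_left.1 hij, prod_filter]
  rfl

end Weights

section Extension

variable [Fintype H.edgeSet]

lemma le_linkWeight_sub [Fintype ι] (hp : ∀ e ∈ H.edgeFinset, p e ∈ Set.Icc 0 1) (hε : 0 ≤ ε)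
    (hsmall : (Fintype.card ι + 1) * ε ≤ ∏ e ∈ H.edgeFinset, p e) (S : Finset ι) (l : ι) :
    ε ≤ linkWeight H p S l - #S * ε := by
  have hcard : (#S : ℝ) * ε ≤ Fintype.card ι * ε := by gcongr; exact card_le_univ S
  linarith [prod_edgeFinset_le_linkWeight hp S l]

lemma IsTypical.insert_update [DecidableEq ι] (hp : ∀ e ∈ H.edgeFinset, p e ∈ Set.Icc 0 1)
    (hε : 0 ≤ ε) (hsmall : ε ≤ ∏ e ∈ H.edgeFinset, p e) (hx : IsTypical H Γ W p ε S x)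
    (hm : m ∉ S) {w : V}
    (hw : ∀ l ∉ insert m S, (edgeWeight H p m l - ε) * #(candidates H Γ W S x l) ≤
      #{b ∈ candidates H Γ W S x l | H.Adj m l → Γ.Adj w b}) :
    IsTypical H Γ W p ε (insert m S) (Function.update x m w) := by
  intro l hl
  have hweight : 0 ≤ edgeWeight H p m l - ε := by
    linarith [prod_edgeFinset_le_edgeWeight hp m l]
  rw [candidates_insert_update hm, linkWeight_insert hm, card_insert_of_notMem hm]
  calc (edgeWeight H p m l * linkWeight H p S l - (#S + 1 : ℕ) * ε) * #(W l)
      ≤ ((edgeWeight H p m l - ε) * (linkWeight H p S l - #S * ε)) * #(W l) := by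
        gcongr
        refine le_trans (le_of_eq ?_) (mul_sub_add_le_sub_mul_sub (edgeWeight_mem_Icc hp m l).2
          (linkWeight_le_one hp S l) hε (by positivity))
        push_cast; ring
    _ = (edgeWeight H p m l - ε) * ((linkWeight H p S l - #S * ε) * #(W l)) := mul_assoc _ _ _
    _ ≤ (edgeWeight H p m l - ε) * #(candidates H Γ W S x l) := by
        gcongr
        exact hx l fun h => hl (mem_insert_of_mem h)
    _ ≤ _ := hw l hl

lemma card_typicalExtensions_ge [Fintype ι] [DecidableEq ι] (hreg : IsRegularTuple H Γ W p ε)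
    (hp : ∀ e ∈ H.edgeFinset, p e ∈ Set.Icc 0 1) (hε : 0 ≤ ε)
    (hsmall : (Fintype.card ι + 1) * ε ≤ ∏ e ∈ H.edgeFinset, p e)
    (hx : IsTypical H Γ W p ε S x) (hm : m ∉ S) :
    (linkWeight H p S m - Fintype.card ι * ε) * #(W m) ≤
      #(typicalExtensions H Γ W p ε S x m) := by
  classical
  set atypical : ι → Finset V := fun l =>
    {w ∈ W m | (#{b ∈ candidates H Γ W S x l | H.Adj m l → Γ.Adj w b} : ℝ) <
      (edgeWeight H p m l - ε) * #(candidates H Γ W S x l)}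
  have hsmall' : ε ≤ ∏ e ∈ H.edgeFinset, p e :=
    (le_mul_of_one_le_left hε (by simp)).trans hsmall
  have hcover : candidates H Γ W S x m ⊆
      typicalExtensions H Γ W p ε S x m ∪ (insert m S)ᶜ.biUnion atypical := by
    intro w hw
    by_cases hbad : w ∈ (insert m S)ᶜ.biUnion atypical
    · exact mem_union_right _ hbad
    refine mem_union_left _ (mem_typicalExtensions.2
      ⟨hw, hx.insert_update hp hε hsmall' hm fun l hl => ?_⟩)
    by_contra! hlow
    exact hbad (mem_biUnion.2 ⟨l, mem_compl.2 hl, mem_filter.2 ⟨candidates_subset hw, hlow⟩⟩)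
  have hatypical : (#((insert m S)ᶜ.biUnion atypical) : ℝ) ≤
      (Fintype.card ι - (#S + 1)) * (ε * #(W m)) := by
    calc (#((insert m S)ᶜ.biUnion atypical) : ℝ) ≤ ∑ l ∈ (insert m S)ᶜ, (#(atypical l) : ℝ) :=
          mod_cast card_biUnion_le
      _ ≤ ∑ _l ∈ (insert m S)ᶜ, ε * #(W m) := sum_le_sum fun l hl =>
          card_atypical_le hreg hε (le_linkWeight_sub hp hε hsmall S l) hx fun h =>
            mem_compl.1 hl (mem_insert_of_mem h)
      _ = _ := by
          rw [sum_const, nsmul_eq_mul, card_compl, Nat.cast_sub (card_le_univ _),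
            card_insert_of_notMem hm]
          push_cast; rfl
  have hcard : (#(candidates H Γ W S x m) : ℝ) ≤
      #(typicalExtensions H Γ W p ε S x m) + #((insert m S)ᶜ.biUnion atypical) :=
    mod_cast (card_le_card hcover).trans (card_union_le _ _)
  have hpos : 0 ≤ ε * #(W m) := by positivity
  linarith [hx m hm]

end Extension

section Blowup

variable {κ : Type*} {I : Finset κ} {X : κ → ι → V}

lemma IsTypicalBlowup.of_empty (I : Finset κ) (X : κ → ι → V) :
    IsTypicalBlowup H Γ W p ε ∅ I X where
  injOn := by simp
  mem := by simp
  adj := by simp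
  typical _ _ := isTypical_empty

lemma IsTypicalBlowup.mono {I' : Finset κ} (h : IsTypicalBlowup H Γ W p ε S I X) (hI : I' ⊆ I) :
    IsTypicalBlowup H Γ W p ε S I' X where
  injOn i hi := (h.injOn i hi).mono (coe_subset.2 hI)
  mem i hi a ha := h.mem i hi a (hI ha)
  adj i hi j hj hij a ha b hb := h.adj i hi j hj hij a (hI ha) b (hI hb)
  typical a ha := h.typical a (hI ha)

lemma IsTypicalBlowup.insert_update [DecidableEq ι] (h : IsTypicalBlowup H Γ W p ε S I X)
    (hm : m ∉ S) {f : κ → V} (hf : Set.InjOn f I)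
    (hmem : ∀ a ∈ I, ∀ b ∈ I, f b ∈ typicalExtensions H Γ W p ε S (X a) m) :
    IsTypicalBlowup H Γ W p ε (insert m S) I fun a => Function.update (X a) m (f a) := by
  have hne : ∀ i ∈ S, i ≠ m := fun i hi => ne_of_mem_of_not_mem hi hm
  have hcand : ∀ a ∈ I, ∀ b ∈ I, f b ∈ W m ∧ ∀ i ∈ S, H.Adj i m → Γ.Adj (X a i) (f b) :=
    fun a ha b hb => by
      simpa only [candidates, mem_filter] using (mem_typicalExtensions.1 (hmem a ha b hb)).1
  refine ⟨?_, ?_, ?_, fun a ha => ?_⟩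
  · simp only [forall_mem_insert, Function.update_self]
    exact ⟨hf, fun i hi => by simpa only [Function.update_of_ne (hne i hi)] using h.injOn i hi⟩
  · simp only [forall_mem_insert, Function.update_self]
    exact ⟨fun a ha => (hcand a ha a ha).1, fun i hi => by
      simpa only [Function.update_of_ne (hne i hi)] using h.mem i hi⟩
  · simp only [forall_mem_insert, Function.update_self]
    refine ⟨⟨fun hmm => (H.irrefl hmm).elim, fun j hj hmj a ha b hb => ?_⟩, fun i hi =>
      ⟨fun him a ha b hb => ?_, fun j hj hij => ?_⟩⟩
    · rw [Function.update_of_ne (hne j hj)]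
      exact ((hcand b hb a ha).2 j hj hmj.symm).symm
    · rw [Function.update_of_ne (hne i hi)]
      exact (hcand a ha b hb).2 i hi him
    · simpa only [Function.update_of_ne (hne i hi), Function.update_of_ne (hne j hj)]
        using h.adj i hi j hj hij
  · exact (mem_typicalExtensions.1 (hmem a ha a ha)).2

lemma IsTypicalBlowup.exists_insert_of_card_le [DecidableEq ι] [Nonempty V]
    (h : IsTypicalBlowup H Γ W p ε S I X) (hm : m ∉ S) {C : Finset V}
    (hC : ∀ a ∈ I, C ⊆ typicalExtensions H Γ W p ε S (X a) m) (hcard : #I ≤ #C) :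
    ∃ X', IsTypicalBlowup H Γ W p ε (insert m S) I X' := by
  obtain ⟨f, hfC, hf⟩ := I.finite_toSet.exists_injOn_of_encard_le (t := (C : Set V))
    (by simpa only [Set.encard_coe_eq_coe_finsetCard] using mod_cast hcard)
  exact ⟨_, h.insert_update hm hf fun a ha b hb => hC a ha (hfC hb)⟩

variable [Fintype ι] [Fintype H.edgeSet] [Nonempty V]

lemma exists_isTypicalBlowup_singleton (hreg : IsRegularTuple H Γ W p ε)
    (hp : ∀ e ∈ H.edgeFinset, p e ∈ Set.Icc 0 1) (hε : 0 ≤ ε)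
    (hsmall : (Fintype.card ι + 1) * ε ≤ ∏ e ∈ H.edgeFinset, p e) (v : ι) :
    ∃ A : Finset V, (1 - Fintype.card ι * ε) * #(W v) ≤ #A ∧
      ∃ X, IsTypicalBlowup H Γ W p ε {v} A X := by
  classical
  set x : ι → V := fun _ => Classical.arbitrary V
  refine ⟨typicalExtensions H Γ W p ε ∅ x v, ?_, Function.update x v, ?_⟩
  · simpa only [linkWeight, prod_empty] using
      card_typicalExtensions_ge hreg hp hε hsmall isTypical_empty (notMem_empty v)
  · rw [← insert_empty_eq]
    exact (IsTypicalBlowup.of_empty _ _).insert_update (notMem_empty v) (Set.injOn_id _)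
      fun _ _ _ hb => hb

variable [DecidableEq ι]

lemma IsTypicalBlowup.exists_insert (h : IsTypicalBlowup H Γ W p ε S I X)
    (hreg : IsRegularTuple H Γ W p ε) (hp : ∀ e ∈ H.edgeFinset, p e ∈ Set.Icc 0 1) (hε : 0 ≤ ε)
    (hsmall : (Fintype.card ι + 1) * ε ≤ ∏ e ∈ H.edgeFinset, p e) (hm : m ∉ S)
    (hI : (2 : ℝ) ^ #I * #I ≤ ε * #(W m)) :
    ∃ I' ⊆ I, (linkWeight H p S m - (Fintype.card ι + 1) * ε) * #I ≤ #I' ∧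
      ∃ X', IsTypicalBlowup H Γ W p ε (insert m S) I' X' := by
  classical
  have hsub : ∀ a, {w ∈ W m | w ∈ typicalExtensions H Γ W p ε S (X a) m} =
      typicalExtensions H Γ W p ε S (X a) m := fun a => by
    rw [filter_mem_eq_inter, inter_eq_right]
    exact typicalExtensions_subset
  obtain ⟨I', hI'I, hlarge, C, -, hIC, hC⟩ := exists_subset_card_ge_and_card_common_ge I (W m)
    (fun a w => w ∈ typicalExtensions H Γ W p ε S (X a) m)
    (r := linkWeight H p S m - Fintype.card ι * ε)
    (by linarith [prod_edgeFinset_le_linkWeight hp S m])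
    (fun a ha => (hsub a).symm ▸ card_typicalExtensions_ge hreg hp hε hsmall (h.typical a ha) hm) hI
  exact ⟨I', hI'I, le_of_eq_of_le (by ring) hlarge,
    (h.mono hI'I).exists_insert_of_card_le hm hC ((card_le_card hI'I).trans hIC)⟩

lemma IsTypicalBlowup.exists_union (h : IsTypicalBlowup H Γ W p ε {u, v} I X)
    (hreg : IsRegularTuple H Γ W p ε) (hp : ∀ e ∈ H.edgeFinset, p e ∈ Set.Icc 0 1) (hε : 0 ≤ ε)
    (hsmall : (Fintype.card ι + 1) * ε ≤ ∏ e ∈ H.edgeFinset, p e)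
    (hI : ∀ i, (2 : ℝ) ^ #I * #I ≤ ε * #(W i)) (S : Finset ι) (hS : Disjoint S {u, v}) :
    ∃ I' ⊆ I, (∏ e ∈ H.edgeFinset.erase s(u, v) ∩ (S ∪ {u, v}).sym2, p e -
        #S * ((Fintype.card ι + 1) * ε)) * #I ≤ #I' ∧
      ∃ X', IsTypicalBlowup H Γ W p ε (S ∪ {u, v}) I' X' := by
  have hη : 0 ≤ (Fintype.card ι + 1) * ε := by positivity
  have hprod : ∀ T, ∏ e ∈ H.edgeFinset.erase s(u, v) ∩ T, p e ≤ 1 := fun T =>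
    prod_le_one (fun e he => (hp e (mem_of_mem_erase (inter_subset_left he))).1)
      fun e he => (hp e (mem_of_mem_erase (inter_subset_left he))).2
  induction S using Finset.induction_on with
  | empty =>
    refine ⟨I, Subset.rfl, ?_, X, by rwa [empty_union]⟩
    simpa using mul_le_of_le_one_left (Nat.cast_nonneg _) (hprod _)
  | insert m S hmS ih =>
    obtain ⟨hmuv, hSuv⟩ := disjoint_insert_left.1 hS
    obtain ⟨I₁, hI₁I, hI₁, X₁, h₁⟩ := ih hSuv
    have hm : m ∉ S ∪ {u, v} := by simp only [mem_union, hmS, hmuv, or_self, not_false_eq_true]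
    have hsize : (2 : ℝ) ^ #I₁ * #I₁ ≤ ε * #(W m) := by
      have := card_le_card hI₁I
      refine le_trans ?_ (hI m)
      gcongr
      norm_num
    obtain ⟨I₂, hI₂I₁, hI₂, X₂, h₂⟩ := h₁.exists_insert hreg hp hε hsmall hm hsize
    rw [mem_insert, mem_singleton, not_or] at hmuv
    rw [insert_union, prod_erase_edge_inter_sym2_insert hm hmuv.1 hmuv.2, card_insert_of_notMem hmS]
    refine ⟨I₂, hI₂I₁.trans hI₁I, ?_, X₂, h₂⟩
    set Q := ∏ e ∈ H.edgeFinset.erase s(u, v) ∩ (S ∪ {u, v}).sym2, p e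
    have hlink := prod_edgeFinset_le_linkWeight hp (S ∪ {u, v}) m
    calc (linkWeight H p (S ∪ {u, v}) m * Q - (#S + 1 : ℕ) * ((Fintype.card ι + 1) * ε)) * #I
        ≤ (linkWeight H p (S ∪ {u, v}) m - (Fintype.card ι + 1) * ε) *
            (Q - #S * ((Fintype.card ι + 1) * ε)) * #I := by
          gcongr
          refine le_trans (le_of_eq ?_) (mul_sub_add_le_sub_mul_sub
            (linkWeight_le_one hp (S ∪ {u, v}) m) (hprod _) hη (by positivity))
          push_cast; ring
      _ ≤ (linkWeight H p (S ∪ {u, v}) m - (Fintype.card ι + 1) * ε) * #I₁ := by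
          rw [mul_assoc]
          exact mul_le_mul_of_nonneg_left hI₁ (by linarith)
      _ ≤ #I₂ := hI₂

lemma exists_isTypicalBlowup_pair (hreg : IsRegularTuple H Γ W p ε)
    (hp : ∀ e ∈ H.edgeFinset, p e ∈ Set.Icc 0 1) (hε : 0 ≤ ε)
    (hsmall : (Fintype.card ι + 1) * ε ≤ ∏ e ∈ H.edgeFinset, p e) (huv : H.Adj u v) {c : ℝ}
    (hc : 0 ≤ c) (hcp : c + (2 * Fintype.card ι + 1) * ε ≤ p s(u, v)) {s : ℕ}
    (hsv : s ≤ ε * #(W v)) (hsu : s ≤ c ^ s * #(W u)) :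
    ∃ I : Finset V, #I = s ∧ ∃ X, IsTypicalBlowup H Γ W p ε {u, v} I X := by
  classical
  obtain ⟨A, hA, X, hX⟩ := exists_isTypicalBlowup_singleton hreg hp hε hsmall v
  have huv' : u ∉ ({v} : Finset ι) := by simpa using huv.ne
  have hpuv : p s(u, v) ≤ 1 := (hp _ (by simpa using huv)).2
  have hlink : linkWeight H p {v} u = p s(u, v) := by
    simp [linkWeight, edgeWeight, huv.symm, Sym2.eq_swap]
  have hK : (1 : ℝ) ≤ Fintype.card ι := mod_cast Fintype.card_pos_iff.2 ⟨u⟩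
  have hsA : (s : ℝ) ≤ (Fintype.card ι + 1) * ε * #A := by
    have hA2 : (#(W v) : ℝ) ≤ 2 * #A := by nlinarith [Nat.cast_nonneg (α := ℝ) #(W v)]
    calc (s : ℝ) ≤ 2 * (ε * #A) := by nlinarith
      _ ≤ (Fintype.card ι + 1) * (ε * #A) := by gcongr; linarith
      _ = _ := (mul_assoc _ _ _).symm
  have hdeg : (c * #A + s) * #(W u) ≤
      ∑ b ∈ W u, (#{a ∈ A | b ∈ typicalExtensions H Γ W p ε {v} (X a) u} : ℝ) := by
    calc (c * #A + s) * #(W u)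
        ≤ (c * #A + (Fintype.card ι + 1) * ε * #A) * #(W u) := by gcongr
      _ ≤ #A * ((p s(u, v) - Fintype.card ι * ε) * #(W u)) := by
          rw [← add_mul, mul_comm _ (#A : ℝ), mul_assoc]
          gcongr
          linarith
      _ ≤ ∑ a ∈ A, (#{b ∈ W u | b ∈ typicalExtensions H Γ W p ε {v} (X a) u} : ℝ) := by
          rw [← nsmul_eq_mul, ← sum_const]
          refine sum_le_sum fun a ha => ?_
          rw [filter_mem_eq_inter, inter_eq_right.2 typicalExtensions_subset, ← hlink]
          exact card_typicalExtensions_ge hreg hp hε hsmall (hX.typical a ha) huv'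
      _ = _ := mod_cast sum_card_bipartiteAbove_eq_sum_card_bipartiteBelow
          fun a b => b ∈ typicalExtensions H Γ W p ε {v} (X a) u
  obtain ⟨I, hIA, hIs, C, -, hC, hIC⟩ := exists_subset_card_eq_and_card_common_ge A (W u)
    (fun a b => b ∈ typicalExtensions H Γ W p ε {v} (X a) u) hc (s := s)
    (by
      have : (s : ℝ) ≤ #A := hsA.trans (mul_le_of_le_one_left (Nat.cast_nonneg _) (by nlinarith))
      exact mod_cast this) hdeg
  exact ⟨I, hIs, (hX.mono hIA).exists_insert_of_card_le huv' hIC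
    (hIs ▸ mod_cast hsu.trans hC)⟩

end Blowup

section CanonicalCopy

variable [Fintype ι]

lemma IsTypicalBlowup.exists_canonical_copy {κ : Type*} {I : Finset κ} {X : κ → ι → V}
    (h : IsTypicalBlowup H Γ W p ε univ I X) {t : ℕ} (ht : t ≤ #I) :
    ∃ ψ : ι → Fin t → V, (∀ i, Function.Injective (ψ i)) ∧ (∀ i a, ψ i a ∈ W i) ∧
      ∀ i j, H.Adj i j → ∀ a b, Γ.Adj (ψ i a) (ψ j b) := by
  obtain ⟨e⟩ : Nonempty (Fin t ↪ I) := Function.Embedding.nonempty_of_card_le (by simpa using ht)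
  refine ⟨fun i a => X (e a) i, fun i a b hab => e.injective (Subtype.ext ?_),
    fun i a => h.mem i (mem_univ i) _ (e a).2,
    fun i j hij a b => h.adj i (mem_univ i) j (mem_univ j) hij _ (e a).2 _ (e b).2⟩
  exact h.injOn i (mem_univ i) (e a).2 (e b).2 hab

variable [DecidableEq ι] [Nonempty V]

lemma exists_canonical_copy_of_card_ge (hreg : IsRegularTuple H Γ W p ε)
    (hp : ∀ e ∈ H.edgeFinset, p e ∈ Set.Icc 0 1) (hε : 0 ≤ ε)
    (hsmall : (Fintype.card ι + 1) * ε ≤ ∏ e ∈ H.edgeFinset, p e) (huv : H.Adj u v) {c : ℝ}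
    (hc : 0 ≤ c) (hc2 : c ≤ 1 / 2) (hcp : c + (2 * Fintype.card ι + 1) * ε ≤ p s(u, v)) {s : ℕ}
    (hs : ∀ i, s ≤ ε * c ^ s * #(W i)) {t : ℕ}
    (ht : t ≤ (∏ e ∈ H.edgeFinset.erase s(u, v), p e -
      Fintype.card ι * ((Fintype.card ι + 1) * ε)) * s) :
    ∃ ψ : ι → Fin t → V, (∀ i, Function.Injective (ψ i)) ∧ (∀ i a, ψ i a ∈ W i) ∧
      ∀ i j, H.Adj i j → ∀ a b, Γ.Adj (ψ i a) (ψ j b) := by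
  have hε1 : ε ≤ 1 := by
    have := (hp _ (by simpa using huv : s(u, v) ∈ H.edgeFinset)).2
    nlinarith [Nat.cast_nonneg (α := ℝ) (Fintype.card ι)]
  have hpow : ∀ i, (2 : ℝ) ^ s * s ≤ ε * #(W i) := by
    intro i
    calc (2 : ℝ) ^ s * s ≤ 2 ^ s * (ε * c ^ s * #(W i)) := by gcongr; exact hs i
      _ = (2 * c) ^ s * (ε * #(W i)) := by ring
      _ ≤ ε * #(W i) := mul_le_of_le_one_left (by positivity)
          (pow_le_one₀ (by positivity) (by linarith))
  obtain ⟨I, rfl, X, hX⟩ := exists_isTypicalBlowup_pair hreg hp hε hsmall huv hc hcp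
    ((le_mul_of_one_le_left (Nat.cast_nonneg s) (one_le_pow₀ one_le_two)).trans (hpow v))
    ((hs u).trans (by gcongr; exact mul_le_of_le_one_left (by positivity) hε1))
  obtain ⟨I', -, hI', X', hX'⟩ := hX.exists_union hreg hp hε hsmall hpow {u, v}ᶜ
    disjoint_compl_left
  have huniv : ({u, v}ᶜ ∪ {u, v} : Finset ι) = univ := by rw [union_comm, union_compl]
  rw [huniv] at hX'
  rw [huniv, sym2_univ, inter_univ] at hI'
  refine hX'.exists_canonical_copy (Nat.cast_le (α := ℝ) |>.1 (ht.trans (le_trans ?_ hI')))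
  gcongr
  exact card_le_univ _

end CanonicalCopy

end RegularTuple

theorem blowup_in_regular_tuples_general {ι : Type*} [Fintype ι] [DecidableEq ι]
    (H : SimpleGraph ι) [DecidableRel H.Adj] {u v : ι} (huv : H.Adj u v) (p : Sym2 ι → ℝ)
    (hp : ∀ e ∈ H.edgeFinset, p e ∈ Set.Icc 0 1) (hpuv : p s(u, v) ≤ 1 / 2) {α : ℝ} (hα0 : 0 < α)
    (hα1 : α < ∏ e ∈ H.edgeFinset, p e) :
    ∀ᶠ n : ℕ in atTop, ∀ (V : Type*) (Γ : SimpleGraph V) [DecidableRel Γ.Adj] (W : ι → Finset V),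
      (∀ i, n ≤ #(W i)) → IsRegularTuple H Γ W p (α ^ 2 / (8 * (Fintype.card ι : ℝ) ^ 2)) →
        ∃ ψ : ι → Fin ⌊((∏ e ∈ H.edgeFinset.erase s(u, v), p e) - α) *
            Real.log n / Real.log (1 / p s(u, v))⌋₊ → V,
          (∀ i, Function.Injective (ψ i)) ∧ (∀ i a, ψ i a ∈ W i) ∧
            ∀ i j, H.Adj i j → ∀ a b, Γ.Adj (ψ i a) (ψ j b) := by
  set q := ∏ e ∈ H.edgeFinset.erase s(u, v), p e
  have hq : ∏ e ∈ H.edgeFinset, p e ≤ q :=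
    prod_le_prod_of_subset_of_le_one (erase_subset _ _) (fun e he => (hp e he).1)
      fun e he _ => (hp e he).2
  have hq1 : q ≤ 1 := prod_le_one (fun e he => (hp e (mem_of_mem_erase he)).1)
    fun e he => (hp e (mem_of_mem_erase he)).2
  have hαp : α < p s(u, v) :=
    hα1.trans_le (by simpa [edgeWeight, huv] using prod_edgeFinset_le_edgeWeight hp u v)
  have hαq : α < q := hα1.trans_le hq
  have hcard : 2 ≤ Fintype.card ι := Fintype.one_lt_card_iff.2 ⟨u, v, huv.ne⟩
  have htol := two_mul_add_one_mul_tolerance_le (α := α) hcard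
  have htol' := mul_succ_mul_tolerance_le (α := α) hcard
  set ε := α ^ 2 / (8 * (Fintype.card ι : ℝ) ^ 2)
  have hε : 0 < ε := by
    have : 0 < Fintype.card ι := by lia
    positivity
  have hα2 : α ^ 2 / 4 < α := by nlinarith
  have hsmall : (Fintype.card ι + 1) * ε ≤ ∏ e ∈ H.edgeFinset, p e := by
    nlinarith [mul_nonneg (Nat.cast_nonneg (α := ℝ) (Fintype.card ι)) hε.le]
  filter_upwards [eventually_gt_atTop 0,
    eventually_exists_blowup_size hα0 hαp hpuv hαq hq1 (by positivity) htol htol' hε]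
    with n hn ⟨s, hs, hsize⟩ V Γ _ W hW hreg
  have : Nonempty V := (card_pos.1 (hn.trans_le (hW u))).to_type
  have hc : 0 ≤ p s(u, v) - (2 * Fintype.card ι + 1) * ε := by linarith
  have hc' : p s(u, v) - (2 * Fintype.card ι + 1) * ε ≤ 1 / 2 := by
    linarith [mul_nonneg (by positivity : (0 : ℝ) ≤ 2 * Fintype.card ι + 1) hε.le]
  refine exists_canonical_copy_of_card_ge hreg hp hε.le hsmall huv hc hc' (sub_add_cancel _ _).le
    (fun i => hs.trans ?_) ((Nat.floor_le ?_).trans hsize)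
  · gcongr
    exact hW i
  · exact div_nonneg (mul_nonneg (sub_nonneg.2 hαq.le) (Real.log_natCast_nonneg n))
      (Real.log_nonneg ((le_div_iff₀ (hα0.trans hαp)).2 (by linarith)))

/-- Lemma 2.3, the main technical lemma. Let `H` be a graph on vertex set
`Fin (k+2)` with `0 ~ 1` an edge (playing the role of `{1,2}`). Given densities
`p e ∈ (0,1]` for each edge `e` of `H` with `p s(0,1) ≤ 1/2`, and `0 < α < ∏_{e ∈ E(H)} p e`,
for all sufficiently large `n`: if `Γ` has disjoint vertex sets `W i` of size at least `n` such
that each pair `(W i, W j)` with `i ~ j` in `H` is `(α²/(8k²))`-regular of density at least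
`p s(i,j)`, then `Γ` contains a canonical copy of `H[t]` (class `i` inside `W i`) with
`t = ⌊(∏_{e ∈ E(H), e ≠ s(0,1)} p e − α) · log n / log(1/p s(0,1))⌋`. -/
theorem blowup_in_regular_tuples (k : ℕ) (H : SimpleGraph (Fin (k + 2)))
    [DecidableRel H.Adj] (h12 : H.Adj 0 1)
    (p : Sym2 (Fin (k + 2)) → ℝ)
    (hp : ∀ e ∈ H.edgeFinset, 0 < p e ∧ p e ≤ 1)
    (hp12 : p s(0, 1) ≤ 1 / 2)
    (α : ℝ) (hα0 : 0 < α) (hα1 : α < ∏ e ∈ H.edgeFinset, p e) :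
    ∃ n₀ : ℕ, ∀ n : ℕ, n₀ ≤ n →
      ∀ (V : Type) [DecidableEq V] (Γ : SimpleGraph V) [DecidableRel Γ.Adj]
        (W : Fin (k + 2) → Finset V),
        (∀ i j, i ≠ j → Disjoint (W i) (W j)) →
        (∀ i, n ≤ (W i).card) →
        (∀ i j, H.Adj i j →
          Γ.IsUniform (α ^ 2 / (8 * ((k : ℝ) + 2) ^ 2)) (W i) (W j) ∧
          p s(i, j) ≤ (Γ.edgeDensity (W i) (W j) : ℝ)) →
        ∃ ψ : Fin (k + 2) →
            Fin ⌊((∏ e ∈ H.edgeFinset.erase s(0, 1), p e) - α) *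
              Real.log n / Real.log (1 / p s(0, 1))⌋₊ → V,
          (∀ i, Function.Injective (ψ i)) ∧
          (∀ i a, ψ i a ∈ W i) ∧
          (∀ i j, H.Adj i j → ∀ a b, Γ.Adj (ψ i a) (ψ j b)) := by
  obtain ⟨n₀, hn₀⟩ := eventually_atTop.1
    (blowup_in_regular_tuples_general H h12 p
      (fun e he => ⟨(hp e he).1.le, (hp e he).2⟩) hp12 hα0 hα1)
  refine ⟨n₀, fun n hn V _ Γ _ W _ hW hreg => hn₀ n hn V Γ W hW
    ⟨fun i j hij => ?_, fun i j hij => (hreg i j hij).2⟩⟩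
  simpa using (hreg i j hij).1
end

section
/- For every η > 0 and every graph H on k vertices with at least one edge, the following holds with λ = η^{k²} for all n sufficiently large. If G is a graph on n vertices containing at least η n^k copies of H (i.e., at least η n^k subgraphs of G isomorphic to H), then G contains a copy of the blowup H[t] with t = ⌊λ log n⌋. -/
/-!
Let `M ⊆ V ^ k` be the set of copies of `H` in `G`, as tuples of vertices. We look for many tuples
`x₁, …, xₜ ∈ M` such that for all `i, j` and each coordinate `b`, some tuple of `M` agrees with `xᵢ`
before `b` and with `xⱼ` at `b`; the coordinates of the `xⱼ` then span a blowup of `H`.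

They are found one coordinate at a time, for a whole family `M₁, …, Mₘ ⊆ V ^ k` at once, where at
first all `Mⱼ` equal `M`. Classify the vertices `v` by the set of all `j` such that some tuple of
`Mⱼ` starts with `v`. There are only `2 ^ m` classes, so the classes with fewer than `m` vertices
can be neglected if `2 ^ m * m ^ 2` is small compared with `|V|`. Some other class has at least
average density, and an average over injections into it gives distinct `v₁, …, vₘ` for which the
links `{y | (vⱼ, y) ∈ Mⱼ}` have the same total density as the `Mⱼ`, up to a small error. After `k`
rounds the total density counts the `j` for which a tuple has been completed. Since `m` may be any
multiple of `log |V|` by a constant less than `1 / log 2`, this gives blowups of order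
`c * log |V|` for every `c < η / log 2`.
-/

section Averaging

open Finset

variable {V : Type*}

theorem exists_embedding_le_sum {J R : Type*} [Fintype J] [AddCommMonoid R] [LinearOrder R]
    [IsOrderedCancelAddMonoid R] {C : Finset V} (hJC : Fintype.card J ≤ #C) (hC : C.Nonempty)
    (f : J → V → R) {r : R} (hr : #C • r ≤ ∑ v ∈ C, ∑ j, f j v) :
    ∃ g : J ↪ V, (∀ j, g j ∈ C) ∧ r ≤ ∑ j, f j (g j) := by
  have : NeZero #C := ⟨hC.card_pos.ne'⟩
  let i : J ↪ Fin #C := (Fintype.equivFin J).toEmbedding.trans (Fin.castLEEmb hJC)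
  -- The cyclic shifts of one injection cover every vertex of `C` once for each `j`.
  let shift (s : Fin #C) : J ↪ C :=
    i.trans ((Equiv.addRight s).trans C.equivFin.symm).toEmbedding
  have hshift (j : J) : ∑ s, f j (shift s j) = ∑ v ∈ C, f j v := by
    rw [← sum_coe_sort C]
    exact ((Equiv.addLeft (i j)).trans C.equivFin.symm).sum_comp fun v => f j v
  have hsum : ∑ _s : Fin #C, r ≤ ∑ s, ∑ j, f j (shift s j) := by
    rw [sum_comm, sum_congr rfl fun j _ => hshift j, sum_comm]
    simpa using hr
  obtain ⟨s, -, hs⟩ := exists_le_of_sum_le univ_nonempty hsum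
  exact ⟨(shift s).trans (Function.Embedding.subtype _), fun j => (shift s j).2, hs⟩

theorem exists_le_card_fiber_and_mul_le_sum {ι R : Type*} [Fintype V] [Fintype ι] [Nonempty ι]
    [DecidableEq ι] [Ring R] [LinearOrder R] [IsStrictOrderedRing R] (p : V → ι) {F : V → R}
    {b r : R} {m : ℕ} (hb : 0 < b) (hFb : ∀ v, F v ≤ b) (hr : 0 ≤ r)
    (h : Fintype.card V * r + Fintype.card ι * (m * b) ≤ ∑ v, F v) :
    ∃ i, m ≤ #{v | p v = i} ∧ #{v | p v = i} * r ≤ ∑ v with p v = i, F v := by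
  have hfiber : ∑ i, (#{v | p v = i} * r + m * b) ≤ ∑ i, ∑ v with p v = i, F v := by
    rw [sum_fiberwise, sum_add_distrib, ← sum_mul, ← Nat.cast_sum,
      ← card_eq_sum_card_fiberwise fun _ _ => mem_coe.2 (mem_univ _)]
    simpa using h
  obtain ⟨i, -, hi⟩ := exists_le_of_sum_le univ_nonempty hfiber
  refine ⟨i, ?_, (le_add_of_nonneg_right (by positivity)).trans hi⟩
  have hle : (m : R) * b ≤ #{v | p v = i} * b := calc
    m * b ≤ #{v | p v = i} * r + m * b := le_add_of_nonneg_left (by positivity)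
    _ ≤ ∑ v with p v = i, F v := hi
    _ ≤ #{v | p v = i} * b := by simpa using sum_le_card_nsmul _ _ b fun v _ => hFb v
  exact_mod_cast le_of_mul_le_mul_right hle hb

end Averaging

section TupleLink

open Finset

variable {V : Type*} [Fintype V] [DecidableEq V] {k : ℕ}

/-- The link of `v` in a set `M` of `(k + 1)`-tuples: the `k`-tuples that `v` extends, as first
coordinate, to a tuple of `M`. Passing to links processes the coordinates one at a time. -/
def tupleLink (M : Finset (Fin (k + 1) → V)) (v : V) : Finset (Fin k → V) :=
  {y | Fin.cons v y ∈ M}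

@[simp]
theorem mem_tupleLink {M : Finset (Fin (k + 1) → V)} {v : V} {y : Fin k → V} :
    y ∈ tupleLink M v ↔ Fin.cons v y ∈ M := by
  simp [tupleLink]

theorem sum_card_tupleLink (M : Finset (Fin (k + 1) → V)) : ∑ v, #(tupleLink M v) = #M := by
  simp_rw [tupleLink, card_filter]
  rw [← Fintype.sum_prod_type' (f := fun v y => if Fin.cons v y ∈ M then 1 else 0)]
  exact ((Fin.consEquiv fun _ => V).sum_comp fun x => if x ∈ M then 1 else 0).trans (by simp)

theorem sum_dens_tupleLink (M : Finset (Fin (k + 1) → V)) :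
    ∑ v, (tupleLink M v).dens = Fintype.card V * M.dens := by
  cases isEmpty_or_nonempty V
  · simp
  simp_rw [dens_eq_card_div_card, ← sum_div, ← Nat.cast_sum, sum_card_tupleLink]
  have : (Fintype.card V : ℚ≥0) ≠ 0 := by simp
  simp only [Fintype.card_pi, prod_const, card_univ, Fintype.card_fin, Nat.cast_pow]
  field_simp
  ring

end TupleLink

section ExchangeSystem

open Finset

variable {V J : Type*} {k : ℕ}

/-- A choice of one tuple `x j ∈ M j` for each `j ∈ S` such that, at each coordinate, the chosen
tuples differ from one another, and such that for all `j, j' ∈ S` the coordinates of `x j` before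
`b`, followed by the coordinate `b` of `x j'`, extend to a tuple of `M j`. If each `M j` is the set
of copies of a graph `H`, then these tuples span a blowup of `H`. The values of `x` outside `S` are
irrelevant. -/
structure IsExchangeSystem (M : J → Finset (Fin k → V)) (S : Finset J) (x : J → Fin k → V) :
    Prop where
  mem : ∀ j ∈ S, x j ∈ M j
  injOn : ∀ b, Set.InjOn (x · b) S
  exchange : ∀ j ∈ S, ∀ j' ∈ S, ∀ b, ∃ y ∈ M j, (∀ a < b, y a = x j a) ∧ y b = x j' b

namespace IsExchangeSystem

theorem exists_mem_apply_eq {M : Finset (Fin k → V)} {S : Finset J} {x : J → Fin k → V}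
    (h : IsExchangeSystem (fun _ => M) S x) {j j' : J} (hj : j ∈ S) (hj' : j' ∈ S) {a b : Fin k}
    (hab : a ≠ b) : ∃ y ∈ M, y a = x j a ∧ y b = x j' b := by
  rcases hab.lt_or_gt with hlt | hgt
  · obtain ⟨y, hy, hbefore, hat⟩ := h.exchange j hj j' hj' b
    exact ⟨y, hy, hbefore a hlt, hat⟩
  · obtain ⟨y, hy, hbefore, hat⟩ := h.exchange j' hj' j hj a
    exact ⟨y, hy, hat, hbefore b hgt⟩

theorem cons [Fintype V] [DecidableEq V] {M : J → Finset (Fin (k + 1) → V)} {g : J ↪ V}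
    {S : Finset J} {x : J → Fin k → V}
    (h : IsExchangeSystem (fun j => tupleLink (M j) (g j)) S x)
    (hg : ∀ i j j', (tupleLink (M i) (g j)).Nonempty → (tupleLink (M i) (g j')).Nonempty) :
    IsExchangeSystem M S fun j => Fin.cons (g j) (x j) where
  mem j hj := mem_tupleLink.1 (h.mem j hj)
  injOn := Fin.cases (by simp [g.injective.injOn]) (by simpa using h.injOn)
  exchange j hj j' hj' := by
    refine Fin.cases ?_ fun b => ?_
    · obtain ⟨y, hy⟩ := hg j j j' ⟨x j, h.mem j hj⟩
      exact ⟨_, mem_tupleLink.1 hy, by simp, by simp⟩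
    · obtain ⟨y, hy, hbefore, hat⟩ := h.exchange j hj j' hj' b
      refine ⟨_, mem_tupleLink.1 hy, Fin.cases (by simp) fun a hab => ?_, by simpa using hat⟩
      simpa using hbefore a (Fin.succ_lt_succ_iff.1 hab)

end IsExchangeSystem

variable [Fintype V] [Nonempty V] [Fintype J]

theorem exists_embedding_le_sum_dens_tupleLink [DecidableEq V]
    (M : J → Finset (Fin (k + 1) → V)) {r : ℝ} (hr : 0 < r)
    (h : r + 2 ^ Fintype.card J * Fintype.card J ^ 2 / Fintype.card V ≤
      ∑ j, ((M j).dens : ℝ)) :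
    ∃ g : J ↪ V, r ≤ ∑ j, ((tupleLink (M j) (g j)).dens : ℝ) ∧
      ∀ i j j', (tupleLink (M i) (g j)).Nonempty → (tupleLink (M i) (g j')).Nonempty := by
  classical
  have : Nonempty J := by
    by_contra! hJ
    exact hr.not_ge (by simpa using h)
  let F (v : V) : ℝ := ∑ j, ((tupleLink (M j) v).dens : ℝ)
  let p (v : V) : Finset J := {j | (tupleLink (M j) v).Nonempty}
  have hFle (v : V) : F v ≤ Fintype.card J := by
    simpa using sum_le_card_nsmul univ (fun j => ((tupleLink (M j) v).dens : ℝ)) 1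
      fun j _ => mod_cast dens_le_one
  have hFsum : ∑ v, F v = Fintype.card V * ∑ j, ((M j).dens : ℝ) := by
    rw [sum_comm, mul_sum]
    exact sum_congr rfl fun j _ => mod_cast sum_dens_tupleLink (M j)
  obtain ⟨T, hTcard, hTavg⟩ := exists_le_card_fiber_and_mul_le_sum p (m := Fintype.card J)
    (r := r) (by simp [Fintype.card_pos]) hFle hr.le <| by
      rw [hFsum]
      refine le_trans (le_of_eq ?_) (mul_le_mul_of_nonneg_left h (Nat.cast_nonneg _))
      simp only [Fintype.card_finset, Nat.cast_pow, Nat.cast_ofNat]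
      field_simp
  obtain ⟨g, hgT, hg⟩ := exists_embedding_le_sum hTcard
    (card_pos.1 (Fintype.card_pos.trans_le hTcard)) (fun j v => ((tupleLink (M j) v).dens : ℝ))
    (by simpa using hTavg)
  refine ⟨g, hg, fun i j j' hij => ?_⟩
  have hp : p (g j) = p (g j') := by
    rw [(mem_filter.1 (hgT j)).2, (mem_filter.1 (hgT j')).2]
  simpa [p] using hp.le (mem_filter.2 ⟨mem_univ i, hij⟩)

theorem exists_isExchangeSystem (k : ℕ) (M : J → Finset (Fin k → V)) :
    ∃ S x, IsExchangeSystem M S x ∧ ∑ j, ((M j).dens : ℝ) ≤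
      #S + k * (2 ^ Fintype.card J * Fintype.card J ^ 2 / Fintype.card V) := by
  classical
  set ε : ℝ := 2 ^ Fintype.card J * Fintype.card J ^ 2 / Fintype.card V with hε
  induction k with
  | zero =>
    refine ⟨({j | (M j).Nonempty} : Finset J), fun _ => Fin.elim0, ?_, ?_⟩
    · refine ⟨fun j hj => ?_, (·.elim0), fun _ _ _ _ => (·.elim0)⟩
      obtain ⟨y, hy⟩ := (mem_filter.1 hj).2
      rwa [Subsingleton.elim y Fin.elim0] at hy
    · suffices ∀ j, ((M j).dens : ℝ) ≤ if (M j).Nonempty then 1 else 0 by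
        simpa using sum_le_sum fun j (_ : j ∈ univ) => this j
      intro j
      split_ifs with hj
      · exact_mod_cast dens_le_one
      · simp [not_nonempty_iff_eq_empty.1 hj]
  | succ k ih =>
    rcases le_or_gt (∑ j, ((M j).dens : ℝ)) ε with hsmall | hlarge
    · refine ⟨∅, fun _ _ => Classical.arbitrary V, ⟨by simp, by simp, by simp⟩, ?_⟩
      have : 0 ≤ k * ε := by positivity
      simp only [card_empty, Nat.cast_zero, Nat.cast_succ]
      linarith
    · obtain ⟨g, hg, hconst⟩ :=
        exists_embedding_le_sum_dens_tupleLink M (sub_pos.2 hlarge) (by simp [hε])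
      obtain ⟨S, x, hx, hcard⟩ := ih fun j => tupleLink (M j) (g j)
      refine ⟨S, _, hx.cons hconst, ?_⟩
      rw [Nat.cast_succ]
      linarith

end ExchangeSystem

section Blowup

open Finset

variable {V α : Type} {G : SimpleGraph V} {H : SimpleGraph α}

theorem IsExchangeSystem.containsCopy_blowupGraph {J : Type*} {k t : ℕ}
    {M : Finset (Fin k → V)} {S : Finset J} {x : J → Fin k → V}
    (hx : IsExchangeSystem (fun _ => M) S x) (e : Fin k ≃ α)
    (hM : ∀ y ∈ M, ∃ f : H.Copy G, f ∘ e = y) (ht : t ≤ #S) :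
    ContainsCopy (blowupGraph H t) G := by
  let i : Fin t ↪ S := (Fin.castLEEmb ht).trans S.equivFin.symm.toEmbedding
  have hcopy {a b : α} (hab : a ≠ b) (s s' : Fin t) :
      ∃ f : H.Copy G, f a = x (i s) (e.symm a) ∧ f b = x (i s') (e.symm b) := by
    obtain ⟨y, hy, ha, hb⟩ :=
      hx.exists_mem_apply_eq (i s).2 (i s').2 (e.symm.injective.ne hab)
    obtain ⟨f, rfl⟩ := hM y hy
    exact ⟨f, by simpa using ha, by simpa using hb⟩
  refine ⟨fun p => x (i p.2) (e.symm p.1), ?_, ?_⟩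
  · rintro ⟨a, s⟩ ⟨b, s'⟩ heq
    rcases eq_or_ne a b with rfl | hab
    · rw [i.injective (Subtype.ext (hx.injOn _ (i s).2 (i s').2 heq))]
    · obtain ⟨f, ha, hb⟩ := hcopy hab s s'
      exact absurd (f.injective (ha.trans (heq.trans hb.symm))) hab
  · rintro ⟨a, s⟩ ⟨b, s'⟩ (hadj : H.Adj a b)
    obtain ⟨f, ha, hb⟩ := hcopy hadj.ne s s'
    have hf : G.Adj (f a) (f b) := f.toHom.map_adj hadj
    rwa [ha, hb] at hf

theorem containsCopy_blowupGraph_of_le_labelledCopyCount [Fintype V] [Nonempty V] [Fintype α]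
    {η : ℝ} {m t : ℕ} (hm : 2 ^ m * m ^ 2 ≤ Fintype.card V) (ht : t + Fintype.card α ≤ m * η)
    (hG : η * Fintype.card V ^ Fintype.card α ≤ G.labelledCopyCount H) :
    ContainsCopy (blowupGraph H t) G := by
  classical
  let e : Fin (Fintype.card α) ≃ α := (Fintype.equivFin α).symm
  let M : Finset (Fin (Fintype.card α) → V) := univ.image fun f : H.Copy G => f ∘ e
  have hMcard : #M = G.labelledCopyCount H := by
    rw [card_image_of_injective _ fun f f' h =>
      DFunLike.coe_injective (e.surjective.injective_comp_right h), card_univ]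
    simp only [SimpleGraph.labelledCopyCount]
  have hdens : η ≤ M.dens := by
    rw [nnratCast_dens, le_div_iff₀ (by simp [Fintype.card_pos]), hMcard]
    simpa using hG
  obtain ⟨S, x, hx, hS⟩ := exists_isExchangeSystem _ fun _ : Fin m => M
  refine hx.containsCopy_blowupGraph e (by simp [M]) ?_
  have hε : (2 : ℝ) ^ m * m ^ 2 / Fintype.card V ≤ 1 :=
    div_le_one_of_le₀ (mod_cast hm) (Nat.cast_nonneg _)
  have hcard : (t + Fintype.card α : ℝ) ≤ #S + Fintype.card α := calc
    (t + Fintype.card α : ℝ) ≤ m * η := ht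
    _ ≤ m * M.dens := by gcongr
    _ ≤ #S + Fintype.card α * (2 ^ m * m ^ 2 / Fintype.card V) := by
      simpa only [sum_const, card_univ, Fintype.card_fin, nsmul_eq_mul] using hS
    _ ≤ #S + Fintype.card α := by
      gcongr
      exact mul_le_of_le_one_right (Nat.cast_nonneg _) hε
  exact_mod_cast le_of_add_le_add_right hcard

end Blowup

section CopyCount

variable {V α : Type*} [Fintype V] [Fintype α] {G : SimpleGraph V} {H : SimpleGraph α}

theorem labelledCopyCount_le_card_pow :
    G.labelledCopyCount H ≤ Fintype.card V ^ Fintype.card α := by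
  classical
  rw [SimpleGraph.labelledCopyCount, ← Fintype.card_fun]
  exact Fintype.card_le_of_injective _ DFunLike.coe_injective

theorem le_one_of_mul_pow_le_labelledCopyCount [Nonempty V] {η : ℝ}
    (h : η * Fintype.card V ^ Fintype.card α ≤ G.labelledCopyCount H) : η ≤ 1 := by
  have hpos : (0 : ℝ) < Fintype.card V ^ Fintype.card α := by
    simp [Fintype.card_pos]
  rw [← div_self hpos.ne', le_div_iff₀ hpos]
  exact h.trans (mod_cast labelledCopyCount_le_card_pow)

theorem natCard_subgraph_le_labelledCopyCount :
    Nat.card {G' : G.Subgraph // Nonempty (G'.coe ≃g H)} ≤ G.labelledCopyCount H := by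
  classical
  refine le_trans (le_of_eq ?_) SimpleGraph.copyCount_le_labelledCopyCount
  have hsymm (G' : G.Subgraph) : Nonempty (G'.coe ≃g H) ↔ Nonempty (H ≃g G'.coe) :=
    ⟨fun ⟨f⟩ => ⟨f.symm⟩, fun ⟨f⟩ => ⟨f.symm⟩⟩
  simp_rw [SimpleGraph.copyCount, hsymm, Nat.card_eq_fintype_card, Fintype.card_subtype]

end CopyCount

section Asymptotics

open Filter Real

theorem eventually_two_pow_floor_mul_sq_le_exp {A : ℝ} (hA : 0 < A) (hA2 : A * log 2 < 1) :
    ∀ᶠ u : ℝ in atTop, (2 : ℝ) ^ ⌊A * u⌋₊ * (⌊A * u⌋₊ : ℝ) ^ 2 ≤ exp u := by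
  have hsq := (isLittleO_pow_exp_pos_mul_atTop 2 (sub_pos.2 hA2)).bound
    (show 0 < (A ^ 2)⁻¹ by positivity)
  filter_upwards [hsq, eventually_ge_atTop 0] with u hu hu0
  have hfloor : (⌊A * u⌋₊ : ℝ) ≤ A * u := Nat.floor_le (by positivity)
  have htwo : (2 : ℝ) ^ ⌊A * u⌋₊ ≤ exp (A * log 2 * u) := by
    rw [← rpow_natCast, rpow_def_of_pos two_pos]
    calc exp (log 2 * ⌊A * u⌋₊) ≤ exp (log 2 * (A * u)) := by gcongr
      _ = exp (A * log 2 * u) := by ring_nf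
  have hfloor_sq : (⌊A * u⌋₊ : ℝ) ^ 2 ≤ exp ((1 - A * log 2) * u) := calc
    (⌊A * u⌋₊ : ℝ) ^ 2 ≤ (A * u) ^ 2 := by gcongr
    _ = A ^ 2 * u ^ 2 := mul_pow A u 2
    _ ≤ A ^ 2 * ((A ^ 2)⁻¹ * exp ((1 - A * log 2) * u)) := by
      gcongr
      simpa using hu
    _ = exp ((1 - A * log 2) * u) := mul_inv_cancel_left₀ (by positivity) _
  calc (2 : ℝ) ^ ⌊A * u⌋₊ * (⌊A * u⌋₊ : ℝ) ^ 2
      ≤ exp (A * log 2 * u) * exp ((1 - A * log 2) * u) := by gcongr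
    _ = exp u := by rw [← exp_add]; ring_nf

theorem eventually_exists_two_pow_mul_sq_le_exp {c η : ℝ} (hc0 : 0 ≤ c) (hc : c * log 2 < η)
    (d : ℝ) :
    ∀ᶠ u : ℝ in atTop, ∃ m : ℕ, (2 : ℝ) ^ m * m ^ 2 ≤ exp u ∧ c * u + d ≤ m * η := by
  have hlog : 0 < log 2 := log_pos one_lt_two
  have hη : 0 < η := (mul_nonneg hc0 hlog.le).trans_lt hc
  obtain ⟨A, hcA, hA2⟩ : ∃ A, c / η < A ∧ A < 1 / log 2 :=
    exists_between <| by rwa [div_lt_div_iff₀ hη hlog, one_mul]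
  have hA : 0 < A := (div_nonneg hc0 hη.le).trans_lt hcA
  rw [div_lt_iff₀ hη] at hcA
  rw [lt_div_iff₀ hlog] at hA2
  have hgrow : ∀ᶠ u in atTop, η + d ≤ (A * η - c) * u :=
    (tendsto_id.const_mul_atTop (sub_pos.2 hcA)).eventually_ge_atTop _
  filter_upwards [eventually_two_pow_floor_mul_sq_le_exp hA hA2, hgrow] with u hexp hu
  refine ⟨⌊A * u⌋₊, hexp, ?_⟩
  calc c * u + d ≤ (A * u - 1) * η := by linarith
    _ ≤ ⌊A * u⌋₊ * η := by
      gcongr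
      linarith [Nat.lt_floor_add_one (A * u)]

theorem pow_mul_log_two_lt {η : ℝ} (hη : 0 < η) (hη1 : η ≤ 1) {n : ℕ} (hn : n ≠ 0) :
    η ^ n * log 2 < η := calc
  η ^ n * log 2 ≤ η * log 2 := by
    gcongr
    exact pow_le_of_le_one hη.le hη1 hn
  _ < η := mul_lt_of_lt_one_right hη (log_two_lt_d9.trans (by norm_num))

end Asymptotics

theorem nikiforov_original_general {c η : ℝ} (hc0 : 0 ≤ c) (hc : c * Real.log 2 < η)
    {α : Type} [Fintype α] (H : SimpleGraph α) :
    ∃ N : ℕ, ∀ (V : Type) [Fintype V], N ≤ Fintype.card V → ∀ G : SimpleGraph V,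
      η * (Fintype.card V : ℝ) ^ Fintype.card α ≤ G.labelledCopyCount H →
      ContainsCopy (blowupGraph H ⌊c * Real.log (Fintype.card V)⌋₊) G := by
  have hlog : Filter.Tendsto (fun n : ℕ => Real.log n) Filter.atTop Filter.atTop :=
    Real.tendsto_log_atTop.comp tendsto_natCast_atTop_atTop
  obtain ⟨N, hN⟩ := Filter.eventually_atTop.1 <| (Filter.eventually_gt_atTop 0).and <|
    hlog.eventually (eventually_exists_two_pow_mul_sq_le_exp hc0 hc (Fintype.card α))
  refine ⟨N, fun V _ hV G hG => ?_⟩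
  obtain ⟨hpos, m, hm, hmη⟩ := hN _ hV
  have : Nonempty V := Fintype.card_pos_iff.1 hpos
  rw [Real.exp_log (mod_cast hpos)] at hm
  refine containsCopy_blowupGraph_of_le_labelledCopyCount (mod_cast hm) (le_trans ?_ hmη) hG
  gcongr
  exact Nat.floor_le (mul_nonneg hc0 (Real.log_natCast_nonneg _))

/-- Nikiforov's theorem, general graphs. For every `η > 0` and every graph
`H` on `k` vertices with at least one edge, with `λ = η^(k²)`, for all sufficiently large `n`:
every graph `G` on `n` vertices containing at least `η n^k` copies of `H` (subgraphs of `G`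
isomorphic to `H`) contains the blowup `H[t]` with `t = ⌊λ log n⌋`. -/
theorem nikiforov_original (η : ℝ) (hη : 0 < η)
    (α : Type) [Fintype α] (H : SimpleGraph α) (hH : ∃ x y, H.Adj x y) :
    ∃ N : ℕ, ∀ n : ℕ, N ≤ n → ∀ G : SimpleGraph (Fin n),
      η * (n : ℝ) ^ (Fintype.card α) ≤
        (Nat.card {G' : G.Subgraph // Nonempty (G'.coe ≃g H)} : ℝ) →
      ContainsCopy (blowupGraph H ⌊η ^ (Fintype.card α ^ 2) * Real.log n⌋₊) G := by
  have hcopies {n : ℕ} {G : SimpleGraph (Fin n)} :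
      (Nat.card {G' : G.Subgraph // Nonempty (G'.coe ≃g H)} : ℝ) ≤ G.labelledCopyCount H :=
    mod_cast natCard_subgraph_le_labelledCopyCount
  rcases le_or_gt η 1 with hη1 | hη1
  · obtain ⟨x, -⟩ := hH
    have : Nonempty α := ⟨x⟩
    obtain ⟨N, hN⟩ := nikiforov_original_general (by positivity)
      (pow_mul_log_two_lt hη hη1 (n := Fintype.card α ^ 2) (by simp)) H
    refine ⟨N, fun n hn G hG => ?_⟩
    have hblowup := hN (Fin n)
    rw [Fintype.card_fin] at hblowup
    exact hblowup hn G (hG.trans hcopies)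
  · refine ⟨1, fun n hn G hG => absurd ?_ hη1.not_ge⟩
    have : Nonempty (Fin n) := ⟨⟨0, hn⟩⟩
    refine le_one_of_mul_pow_le_labelledCopyCount (G := G) (H := H) ?_
    simpa using hG.trans hcopies
end
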